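/- arXiv:2511.12327 — 12 statements merged into one kernel-verified Lean document; each statement's English description precedes it below -/
import Mathlib

section
/- Let A, B ⊆ ℝ and let f : A → B be strictly decreasing. Then there exists a countable set A₀ ⊆ A such that the restriction of f to A \ A₀ is a homeomorphism of A \ A₀ onto f(A \ A₀), where both sets carry the Euclidean subspace topology. -/
/-- For any strictly decreasing `f : A → B` (sets of reals),
there is a countable `A₀ ⊆ A` such that `f` restricted to `A \ A₀` is a
homeomorphism onto its image `f '' (A \ A₀)` (Euclidean subspace topologies). -/
theorem stmt0 (A B : Set ℝ) (f : ℝ → ℝ) (hf : StrictAntiOn f A)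
    (hmap : Set.MapsTo f A B) :
    ∃ A₀ : Set ℝ, A₀.Countable ∧ A₀ ⊆ A ∧
      ∃ h : (A \ A₀ : Set ℝ) ≃ₜ (f '' (A \ A₀) : Set ℝ),
        ∀ x : (A \ A₀ : Set ℝ), (h x : ℝ) = f x := by
  obtain ⟨g, hg⟩ : ∃ g : ℝ → ℝ, ∀ x ∈ A, g (f x) = x :=
    ⟨Function.invFunOn f A, fun x hx => hf.injOn.leftInvOn_invFunOn hx⟩
  have hga : AntitoneOn g (f '' A) := by
    rintro _ ⟨x, hx, rfl⟩ _ ⟨y, hy, rfl⟩ hxy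
    rw [hg x hx, hg y hy]
    exact (hf.le_iff_ge hx hy).1 hxy
  have c1 := hf.antitoneOn.countable_not_continuousWithinAt
  have c2 := hga.countable_not_continuousWithinAt
  refine ⟨_, c1.union (c2.image g), ?_, ?_⟩
  · rintro x (hx | ⟨_, ⟨⟨x, hx, rfl⟩, -⟩, rfl⟩)
    · exact hx.1
    · rw [hg x hx]; exact hx
  generalize hA : ({x | x ∈ A ∧ ¬ContinuousWithinAt f A x} ∪
    g '' {y | y ∈ f '' A ∧ ¬ContinuousWithinAt g (f '' A) y}) = A₀
  have hfc : ContinuousOn f (A \ A₀) := by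
    intro x hx
    refine ContinuousWithinAt.mono ?_ Set.diff_subset
    by_contra h
    exact hx.2 (hA ▸ Or.inl ⟨hx.1, h⟩)
  have hgc : ContinuousOn g (f '' (A \ A₀)) := by
    rintro _ ⟨x, hx, rfl⟩
    refine ContinuousWithinAt.mono ?_ (Set.image_mono Set.diff_subset)
    by_contra h
    exact hx.2 (hA ▸ Or.inr ⟨f x, ⟨⟨x, hx.1, rfl⟩, h⟩, hg x hx.1⟩)
  have hgm : Set.MapsTo g (f '' (A \ A₀)) (A \ A₀) := by
    rintro _ ⟨x, hx, rfl⟩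
    rw [hg x hx.1]; exact hx
  refine ⟨{ toFun := (Set.mapsTo_image f (A \ A₀)).restrict
            invFun := hgm.restrict
            left_inv := ?_
            right_inv := ?_
            continuous_toFun := hfc.mapsToRestrict _
            continuous_invFun := hgc.mapsToRestrict _ }, fun x => rfl⟩
  · rintro ⟨x, hx⟩
    exact Subtype.ext (hg x hx.1)
  · rintro ⟨_, ⟨x, hx, rfl⟩⟩
    exact Subtype.ext (congrArg f (hg x hx.1))
end

section
/- Let X ⊆ ℝ and suppose f : X → X is a strictly decreasing bijection that is a homeomorphism of X with respect to the Euclidean subspace topology. Let A ⊆ X and B = X \ A, and let G_{f|A} = {(a, f(a)) : a ∈ A} and G_{f|B} = {(b, f(b)) : b ∈ B}. If there exist sets U, V ⊆ X × X that are open in (X[≤])² with G_{f|A} ⊆ U, G_{f|B} ⊆ V and U ∩ V = ∅, then A is a relative Fσ-set in X with respect to the Euclidean subspace topology. -/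
/-- The Sorgenfrey (lower limit) topology on `ℝ`, generated by half-open
intervals `[a, b)` with `a < b`. -/
def sorgenfrey : TopologicalSpace ℝ :=
  TopologicalSpace.generateFrom {s : Set ℝ | ∃ a b : ℝ, a < b ∧ s = Set.Ico a b}

/-- The Sorgenfrey subspace topology on a set of reals `X`, i.e. `X[≤]`. -/
def sorgenfreySub (X : Set ℝ) : TopologicalSpace X :=
  sorgenfrey.induced Subtype.val

/-- The product topology `(X[≤])²` on `X × X`. -/
def sorgenfreySq (X : Set ℝ) : TopologicalSpace (X × X) :=
  @instTopologicalSpaceProd X X (sorgenfreySub X) (sorgenfreySub X)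

open Topology

theorem sorg_open {s : Set ℝ} (hs : IsOpen[sorgenfrey] s) :
    ∀ x ∈ s, ∃ e > 0, Set.Ico x (x + e) ⊆ s := by
  have hs' : TopologicalSpace.GenerateOpen
    {s : Set ℝ | ∃ a b : ℝ, a < b ∧ s = Set.Ico a b} s := hs
  clear hs
  induction hs' with
  | basic s h =>
    obtain ⟨a, b, hab, rfl⟩ := h
    intro x hx
    refine ⟨b - x, by linarith [hx.2], fun y hy => ⟨hx.1.trans hy.1, by linarith [hy.2]⟩⟩
  | univ => exact fun x _ => ⟨1, one_pos, Set.subset_univ _⟩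
  | inter s t h1 h2 ih1 ih2 =>
    intro x hx
    obtain ⟨e, he, h⟩ := ih1 x hx.1
    obtain ⟨d, hd, h'⟩ := ih2 x hx.2
    refine ⟨min e d, lt_min he hd, fun y hy => ⟨h ⟨hy.1, ?_⟩, h' ⟨hy.1, ?_⟩⟩⟩
    · linarith [hy.2, min_le_left e d]
    · linarith [hy.2, min_le_right e d]
  | sUnion S hS ih =>
    rintro x ⟨t, ht, hx⟩
    obtain ⟨e, he, h⟩ := ih t ht x hx
    exact ⟨e, he, h.trans (Set.subset_sUnion_of_mem ht)⟩

theorem sorg_box {X : Set ℝ} {U : Set (X × X)} (hU : IsOpen[sorgenfreySq X] U)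
    (x y : X) (h : (x, y) ∈ U) : ∃ n : ℕ, ∀ p q : X, (x : ℝ) ≤ p →
      (p : ℝ) < x + 1 / (n + 1) → (y : ℝ) ≤ q → (q : ℝ) < y + 1 / (n + 1) → (p, q) ∈ U := by
  obtain ⟨u, v, hu, hv, hx, hy, huv⟩ :=
    (@isOpen_prod_iff X X (sorgenfreySub X) (sorgenfreySub X) U).1 hU x y h
  obtain ⟨u', hu', rfl⟩ := hu
  obtain ⟨v', hv', rfl⟩ := hv
  obtain ⟨e, he, h1⟩ := sorg_open hu' x hx
  obtain ⟨d, hd, h2⟩ := sorg_open hv' y hy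
  obtain ⟨n, hn⟩ := exists_nat_one_div_lt (lt_min he hd)
  refine ⟨n, fun p q a b c d' => huv ⟨h1 ⟨a, ?_⟩, h2 ⟨c, ?_⟩⟩⟩
  · linarith [min_le_left e d]
  · linarith [min_le_right e d]

/-- If `f : X → X` is a strictly decreasing bijection which is a
homeomorphism for the Euclidean subspace topology, `A ⊆ X`, `B = X \ A`, and the
graphs of `f|A` and `f|B` can be separated by disjoint `(X[≤])²`-open sets, then
`A` is relatively `Fσ` in `X` (Euclidean subspace topology). -/
theorem stmt1 (X : Set ℝ) (f : X ≃ₜ X)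
    (hf : ∀ x y : X, (x : ℝ) < (y : ℝ) → (f y : ℝ) < (f x : ℝ))
    (A : Set ℝ) (hA : A ⊆ X)
    (U V : Set (X × X))
    (hU : @IsOpen _ (sorgenfreySq X) U) (hV : @IsOpen _ (sorgenfreySq X) V)
    (hGAU : {p : X × X | (p.1 : ℝ) ∈ A ∧ p.2 = f p.1} ⊆ U)
    (hGBV : {p : X × X | (p.1 : ℝ) ∉ A ∧ p.2 = f p.1} ⊆ V)
    (hUV : U ∩ V = ∅) :
    ∃ F : ℕ → Set X, (∀ n, IsClosed (F n)) ∧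
      (Subtype.val ⁻¹' A : Set X) = ⋃ n, F n := by
  classical
  let C : ℕ → Set X := fun n => {x | (x : ℝ) ∈ A ∧ ∀ p q : X, (x : ℝ) ≤ p →
      (p : ℝ) < x + 1 / (n + 1) → (f x : ℝ) ≤ q → (q : ℝ) < f x + 1 / (n + 1) → (p, q) ∈ U}
  refine ⟨fun n => closure (C n), fun n => isClosed_closure, ?_⟩
  ext b
  simp only [Set.mem_preimage, Set.mem_iUnion]
  constructor
  · intro hb
    obtain ⟨n, hn⟩ := sorg_box hU b (f b) (hGAU ⟨hb, rfl⟩)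
    exact ⟨n, subset_closure ⟨hb, hn⟩⟩
  · rintro ⟨n, hn⟩
    by_contra hb
    obtain ⟨m, hm⟩ := sorg_box hV b (f b) (hGBV ⟨hb, rfl⟩)
    have pn : (0 : ℝ) < 1 / (n + 1) := Nat.one_div_pos_of_nat
    have pm : (0 : ℝ) < 1 / (m + 1) := Nat.one_div_pos_of_nat
    have hpos := lt_min pn pm
    have e1 : ∀ᶠ a in nhds b, dist a b < min (1 / (n + 1) : ℝ) (1 / (m + 1)) :=
      Metric.ball_mem_nhds b hpos
    have e2 : ∀ᶠ a in nhds b, dist (f a) (f b) < min (1 / (n + 1) : ℝ) (1 / (m + 1)) :=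
      f.continuous.continuousAt (Metric.ball_mem_nhds (f b) hpos)
    obtain ⟨a, ⟨haA, ha⟩, h1, h2⟩ :=
      ((mem_closure_iff_frequently.1 hn).and_eventually (e1.and e2)).exists
    rw [Subtype.dist_eq, Real.dist_eq, abs_lt] at h1 h2
    have l1 := min_le_left (1 / (n + 1) : ℝ) (1 / (m + 1))
    have l2 := min_le_right (1 / (n + 1) : ℝ) (1 / (m + 1))
    rcases lt_trichotomy (a : ℝ) b with h | h | h
    · have h3 := hf a b h
      have hu := ha b (f a) h.le (by linarith) le_rfl (by linarith)
      have hv := hm b (f a) le_rfl (by linarith) h3.le (by linarith)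
      exact (hUV ▸ (⟨hu, hv⟩ : (b, f a) ∈ U ∩ V) : (b, f a) ∈ (∅ : Set (X × X)))
    · exact hb (h ▸ haA)
    · have h3 := hf b a h
      have hu := ha a (f b) le_rfl (by linarith) h3.le (by linarith)
      have hv := hm a (f b) h.le (by linarith) le_rfl (by linarith)
      exact (hUV ▸ (⟨hu, hv⟩ : (a, f b) ∈ U ∩ V) : (a, f b) ∈ (∅ : Set (X × X)))
end

section
/- Let X ⊆ ℝ be such that (X[≤])² is a normal topological space. If there exists a strictly decreasing bijection f : X → X that is a homeomorphism of X with respect to the Euclidean subspace topology, then X is a Q-set. -/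
/-- A set of reals `X` is a Q-set if every subset of `X` is a relative `Gδ`-set
in `X` with respect to the Euclidean subspace topology. -/
def IsQSet (X : Set ℝ) : Prop :=
  ∀ A : Set ℝ, A ⊆ X → IsGδ (Subtype.val ⁻¹' A : Set X)

open scoped Topology

theorem sorg_iff (U : Set ℝ) :
    IsOpen[sorgenfrey] U ↔ ∀ x ∈ U, ∃ ε > 0, Set.Ico x (x + ε) ⊆ U := by
  constructor
  · intro h
    induction h with
    | basic s hs =>
      obtain ⟨a, b, hab, rfl⟩ := hs
      intro x hx
      refine ⟨b - x, by linarith [hx.2], fun y hy => ⟨hx.1.trans hy.1, by linarith [hy.2]⟩⟩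
    | univ => exact fun x _ => ⟨1, one_pos, fun _ _ => trivial⟩
    | inter s t _ _ hs ht =>
      intro x hx
      obtain ⟨e, he, h1⟩ := hs x hx.1
      obtain ⟨d, hd, h2⟩ := ht x hx.2
      refine ⟨min e d, lt_min he hd, fun y hy => ⟨h1 ⟨hy.1, ?_⟩, h2 ⟨hy.1, ?_⟩⟩⟩
      · linarith [hy.2, min_le_left e d]
      · linarith [hy.2, min_le_right e d]
    | sUnion S _ ih =>
      rintro x ⟨s, hs, hx⟩
      obtain ⟨e, he, h1⟩ := ih s hs x hx
      exact ⟨e, he, fun y hy => ⟨s, hs, h1 hy⟩⟩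
  · intro h
    choose! e he h1 using h
    have : U = ⋃₀ {s | ∃ x ∈ U, s = Set.Ico x (x + e x)} := by
      ext y
      constructor
      · intro hy
        exact ⟨_, ⟨y, hy, rfl⟩, le_refl _, by linarith [he y hy]⟩
      · rintro ⟨_, ⟨x, hx, rfl⟩, hy⟩
        exact h1 x hx hy
    rw [this]
    apply TopologicalSpace.GenerateOpen.sUnion
    rintro _ ⟨x, hx, rfl⟩
    exact TopologicalSpace.GenerateOpen.basic _ ⟨x, x + e x, by linarith [he x hx], rfl⟩

theorem sorgSub_iff (X : Set ℝ) (U : Set X) :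
    IsOpen[sorgenfreySub X] U ↔
      ∀ x ∈ U, ∃ ε > 0, ∀ y : X, (x : ℝ) ≤ y → (y : ℝ) < x + ε → y ∈ U := by
  constructor
  · rintro ⟨V, hV, rfl⟩ x hx
    obtain ⟨e, he, h⟩ := (sorg_iff V).1 hV x hx
    exact ⟨e, he, fun y h1 h2 => h ⟨h1, h2⟩⟩
  · intro h
    choose! e he h1 using h
    refine ⟨⋃ x ∈ U, Set.Ico (x : ℝ) (x + e x), ?_, ?_⟩
    · rw [sorg_iff]
      intro z hz
      simp only [Set.mem_iUnion] at hz
      obtain ⟨x, hx, hz⟩ := hz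
      refine ⟨x + e x - z, by linarith [hz.2], fun y hy => ?_⟩
      simp only [Set.mem_iUnion]
      exact ⟨x, hx, hz.1.trans hy.1, by linarith [hy.2]⟩
    · ext y
      simp only [Set.mem_preimage, Set.mem_iUnion]
      constructor
      · rintro ⟨x, hx, hy⟩
        exact h1 x hx y hy.1 hy.2
      · intro hy
        exact ⟨y, hy, le_refl _, by linarith [he y hy]⟩

theorem sorgSq_iff (X : Set ℝ) (U : Set (X × X)) :
    IsOpen[sorgenfreySq X] U ↔
      ∀ p ∈ U, ∃ ε > 0, ∀ q : X × X, (p.1 : ℝ) ≤ q.1 → (q.1 : ℝ) < p.1 + ε →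
        (p.2 : ℝ) ≤ q.2 → (q.2 : ℝ) < p.2 + ε → q ∈ U := by
  have key := @isOpen_prod_iff X X (sorgenfreySub X) (sorgenfreySub X) U
  refine key.trans ⟨?_, ?_⟩
  · rintro h ⟨a, b⟩ hp
    obtain ⟨u, v, hu, hv, ha, hb, huv⟩ := h a b hp
    obtain ⟨e, he, h1⟩ := (sorgSub_iff X u).1 hu a ha
    obtain ⟨d, hd, h2⟩ := (sorgSub_iff X v).1 hv b hb
    refine ⟨min e d, lt_min he hd, fun q q1 q2 q3 q4 => huv ⟨h1 _ q1 ?_, h2 _ q3 ?_⟩⟩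
    · exact q2.trans_le (by simp)
    · exact q4.trans_le (by simp)
  · intro h a b hab
    obtain ⟨e, he, h1⟩ := h _ hab
    have ho : ∀ c : X, IsOpen[sorgenfreySub X] {y : X | (c : ℝ) ≤ y ∧ (y : ℝ) < c + e} := by
      intro c
      rw [sorgSub_iff]
      rintro x ⟨hx1, hx2⟩
      exact ⟨c + e - x, by linarith, fun y h1 h2 => ⟨hx1.trans h1, by linarith⟩⟩
    refine ⟨_, _, ho a, ho b, ⟨le_refl _, by linarith⟩, ⟨le_refl _, by linarith⟩, ?_⟩
    rintro ⟨x, y⟩ ⟨hx, hy⟩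
    exact h1 _ hx.1 hx.2 hy.1 hy.2

theorem graph_closed (X : Set ℝ) (f : X ≃ₜ X)
    (hf : ∀ x y : X, (x : ℝ) < (y : ℝ) → (f y : ℝ) < (f x : ℝ)) (A : Set X) :
    IsClosed[sorgenfreySq X] {p : X × X | p.1 ∈ A ∧ p.2 = f p.1} := by
  rw [← @isOpen_compl_iff _ _ (sorgenfreySq X), sorgSq_iff]
  rintro ⟨a, b⟩ hp
  rcases lt_or_ge (b : ℝ) (f a) with hlt | hge
  · have hc : Continuous fun x : X => (f x : ℝ) := continuous_subtype_val.comp f.continuous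
    obtain ⟨d, hd, h⟩ := Metric.continuous_iff.1 hc a ((f a - b) / 2) (by linarith)
    refine ⟨min d ((f a - b) / 2), lt_min hd (by linarith), ?_⟩
    rintro ⟨x, y⟩ h1 h2 h3 h4 ⟨_, h5⟩
    dsimp only at h1 h2 h3 h4 h5
    subst h5
    have h6 := h x (by
      rw [Subtype.dist_eq, Real.dist_eq, abs_of_nonneg (by linarith)]
      linarith [min_le_left d ((f a - b : ℝ) / 2)])
    rw [Real.dist_eq, abs_lt] at h6
    linarith [min_le_right d ((f a - b : ℝ) / 2), h6.1]
  · refine ⟨1, one_pos, ?_⟩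
    rintro ⟨x, y⟩ h1 h2 h3 h4 ⟨hA, h5⟩
    dsimp only at h1 h2 h3 h4 h5 hA
    subst h5
    rcases h1.lt_or_eq with h | h
    · linarith [hf _ _ h]
    · have : a = x := Subtype.ext h
      subst this
      exact hp ⟨hA, Subtype.ext (le_antisymm h3 hge)⟩

/-- If `(X[≤])²` is normal and there is a strictly decreasing
bijection `f : X → X` which is a homeomorphism for the Euclidean subspace
topology, then `X` is a Q-set. -/
theorem stmt2 (X : Set ℝ) (hnorm : @NormalSpace (X × X) (sorgenfreySq X))
    (f : X ≃ₜ X)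
    (hf : ∀ x y : X, (x : ℝ) < (y : ℝ) → (f y : ℝ) < (f x : ℝ)) :
    IsQSet X := by
  intro A _
  set A' : Set X := Subtype.val ⁻¹' A with hA'
  have hdisj : Disjoint {p : X × X | p.1 ∈ A' ∧ p.2 = f p.1}
      {p : X × X | p.1 ∈ A'ᶜ ∧ p.2 = f p.1} :=
    Set.disjoint_left.2 fun p h1 h2 => h2.1 h1.1
  obtain ⟨U, V, hU, hV, hAU, hBV, hUV⟩ :=
    @NormalSpace.normal _ (sorgenfreySq X) hnorm _ _
      (graph_closed X f hf A') (graph_closed X f hf A'ᶜ) hdisj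
  rw [sorgSq_iff] at hU hV
  let B : ℕ → Set X := fun n => {x | x ∈ A'ᶜ ∧ ∀ q : X × X, (x : ℝ) ≤ q.1 →
    (q.1 : ℝ) < x + 1 / ((n : ℝ) + 1) → (f x : ℝ) ≤ q.2 →
    (q.2 : ℝ) < f x + 1 / ((n : ℝ) + 1) → q ∈ V}
  have hEq : A' = ⋂ n, (closure (B n))ᶜ := by
    ext x
    simp only [Set.mem_iInter, Set.mem_compl_iff]
    constructor
    · intro hx n hcl
      obtain ⟨e, he, h1⟩ := hU (x, f x) (hAU ⟨hx, rfl⟩)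
      have hn : (0 : ℝ) < 1 / ((n : ℝ) + 1) := by positivity
      set r := min e (1 / ((n : ℝ) + 1)) with hr
      have hr0 : 0 < r := lt_min he hn
      have hre : r ≤ e := min_le_left _ _
      have hrn : r ≤ 1 / ((n : ℝ) + 1) := min_le_right _ _
      have hc : Continuous fun x : X => (f x : ℝ) := continuous_subtype_val.comp f.continuous
      obtain ⟨d, hd, h⟩ := Metric.continuous_iff.1 hc x r hr0
      obtain ⟨y, hy, hxy⟩ := Metric.mem_closure_iff.1 hcl (min d r) (lt_min hd hr0)
      have h6 := h y (by rw [dist_comm]; exact hxy.trans_le (min_le_left _ _))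
      have h7 := hxy.trans_le (min_le_right _ _)
      rw [Real.dist_eq, abs_lt] at h6
      rw [Subtype.dist_eq, Real.dist_eq, abs_lt] at h7
      obtain ⟨hyA, hy⟩ := hy
      rcases lt_trichotomy (x : ℝ) y with hlt | heq | hgt
      · have := hf _ _ hlt
        refine Set.disjoint_left.1 hUV (h1 (y, f x) ?_ ?_ ?_ ?_) (hy (y, f x) ?_ ?_ ?_ ?_) <;>
          dsimp only <;> linarith
      · exact hyA ((Subtype.ext heq : x = y) ▸ hx)
      · have := hf _ _ hgt
        refine Set.disjoint_left.1 hUV (h1 (x, f y) ?_ ?_ ?_ ?_) (hy (x, f y) ?_ ?_ ?_ ?_) <;>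
          dsimp only <;> linarith
    · intro h
      by_contra hx
      obtain ⟨e, he, h1⟩ := hV (x, f x) (hBV ⟨hx, rfl⟩)
      obtain ⟨n, hn⟩ := exists_nat_one_div_lt he
      refine h n (subset_closure ⟨hx, fun q q1 q2 q3 q4 => h1 q q1 ?_ q3 ?_⟩)
      · dsimp only; linarith
      · dsimp only; linarith
  rw [hEq]
  exact IsGδ.iInter_of_isOpen fun n => isClosed_closure.isOpen_compl
end

section
/- Let A ⊆ ℝ be uncountable and let f : A → ℝ be strictly decreasing. Then there exist a countable set C and a strictly decreasing function g defined on cl(A) \ C (where cl(A) is the Euclidean closure of A) such that g agrees with f on A \ C. -/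
theorem aux_right (A : Set ℝ) (x y : ℝ) (hxy : x < y)
    (h : ¬ nhdsWithin x (closure A ∩ Set.Ioi x) = ⊥) : ∃ a ∈ A, x < a ∧ a < y := by
  have hne : (nhdsWithin x (closure A ∩ Set.Ioi x)).NeBot := ⟨h⟩
  have h1 : ∀ᶠ z in nhdsWithin x (closure A ∩ Set.Ioi x), z < y :=
    nhdsWithin_le_nhds (Iio_mem_nhds hxy)
  obtain ⟨z, hz, hz2, hz3⟩ := (h1.and self_mem_nhdsWithin).exists
  obtain ⟨a, ha, haA⟩ := mem_closure_iff.1 hz2 (Set.Ioo x y) isOpen_Ioo ⟨hz3, hz⟩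
  exact ⟨a, haA, ha.1, ha.2⟩

theorem aux_left (A : Set ℝ) (x : ℝ)
    (h : ¬ nhdsWithin x (closure A ∩ Set.Iio x) = ⊥) : ∃ a ∈ A, a < x := by
  have hne : (nhdsWithin x (closure A ∩ Set.Iio x)).NeBot := ⟨h⟩
  have h1 : ∀ᶠ z in nhdsWithin x (closure A ∩ Set.Iio x), z ∈ closure A ∩ Set.Iio x :=
    self_mem_nhdsWithin
  obtain ⟨z, hz2, hz3⟩ := h1.exists
  obtain ⟨a, ha, haA⟩ := mem_closure_iff.1 hz2 (Set.Iio x) isOpen_Iio hz3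
  exact ⟨a, haA, ha⟩

/-- A strictly decreasing function on an uncountable set of reals
`A` extends, after removing a countable set `C`, to a strictly decreasing
function on `cl(A) \ C`. -/
theorem stmt5 (A : Set ℝ) (hA : ¬A.Countable) (f : ℝ → ℝ)
    (hf : StrictAntiOn f A) :
    ∃ C : Set ℝ, C.Countable ∧ ∃ g : ℝ → ℝ,
      StrictAntiOn g (closure A \ C) ∧ ∀ x ∈ A \ C, g x = f x := by
  classical
  refine ⟨{x ∈ closure A | nhdsWithin x (closure A ∩ Set.Ioi x) = ⊥} ∪
    {x ∈ closure A | nhdsWithin x (closure A ∩ Set.Iio x) = ⊥},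
    (countable_setOf_isolated_right_within).union (countable_setOf_isolated_left_within),
    fun x => if x ∈ A then f x else sInf (f '' (A ∩ Set.Iio x)), ?_, ?_⟩
  · rintro x ⟨hx, hxC⟩ y ⟨hy, hyC⟩ hxy
    have hxr : ¬ nhdsWithin x (closure A ∩ Set.Ioi x) = ⊥ := fun h => hxC (Or.inl ⟨hx, h⟩)
    have hxl : ¬ nhdsWithin x (closure A ∩ Set.Iio x) = ⊥ := fun h => hxC (Or.inr ⟨hx, h⟩)
    have hyr : ¬ nhdsWithin y (closure A ∩ Set.Ioi y) = ⊥ := fun h => hyC (Or.inl ⟨hy, h⟩)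
    obtain ⟨b, hb, hxb, hby⟩ := aux_right A x y hxy hxr
    obtain ⟨a, ha, hxa, hab⟩ := aux_right A x b hxb hxr
    obtain ⟨c, hc, hyc, -⟩ := aux_right A y (y + 1) (by linarith) hyr
    obtain ⟨d, hd, hdx⟩ := aux_left A x hxl
    have h1 : f a ≤ (if x ∈ A then f x else sInf (f '' (A ∩ Set.Iio x))) := by
      split_ifs with h
      · exact (hf h ha hxa).le
      · refine le_csInf ⟨f d, d, ⟨hd, hdx⟩, rfl⟩ ?_
        rintro _ ⟨e, ⟨he, hex⟩, rfl⟩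
        exact (hf he ha (lt_trans hex hxa)).le
    have h2 : (if y ∈ A then f y else sInf (f '' (A ∩ Set.Iio y))) ≤ f b := by
      split_ifs with h
      · exact (hf hb h hby).le
      · refine csInf_le ⟨f c, ?_⟩ ⟨b, ⟨hb, hby⟩, rfl⟩
        rintro _ ⟨e, ⟨he, hey⟩, rfl⟩
        exact (hf he hc (lt_trans hey hyc)).le
    exact lt_of_le_of_lt h2 (lt_of_lt_of_le (hf ha hb hab) h1)
  · rintro x ⟨hx, -⟩
    exact if_pos hx
end

section
/- Let A ⊆ ℝ, let f : A → ℝ be strictly decreasing, and let g : cl(A) → ℝ be a non-increasing function with g(x) = f(x) for all x ∈ A, where cl(A) is the Euclidean closure of A. Then for every b ∈ ℝ, the fiber g⁻¹({b}) contains at most 3 points. -/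
/-- If `f` is strictly decreasing on `A ⊆ ℝ` and `g` is a
non-increasing function on `cl(A)` agreeing with `f` on `A`, then every fiber
of `g` (within `cl(A)`) has at most 3 points. -/
theorem stmt6 (A : Set ℝ) (f g : ℝ → ℝ) (hf : StrictAntiOn f A)
    (hg : AntitoneOn g (closure A)) (hgf : ∀ x ∈ A, g x = f x) (b : ℝ) :
    (closure A ∩ g ⁻¹' {b}).encard ≤ 3 := by
  by_contra hcon
  have h4 : (4 : ℕ∞) ≤ (closure A ∩ g ⁻¹' {b}).encard := by
    have := Order.add_one_le_of_lt (not_le.mp hcon)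
    norm_num at this
    exact this
  obtain ⟨t, ht, htc⟩ := Set.exists_subset_encard_eq h4
  have hfin : t.Finite := Set.finite_of_encard_eq_coe (k := 4) (by simpa using htc)
  have hcard : hfin.toFinset.card = 4 := by
    have := hfin.encard_eq_coe_toFinset_card
    rw [htc] at this
    exact_mod_cast this.symm
  let e := hfin.toFinset.orderEmbOfFin hcard
  have he : ∀ i, e i ∈ closure A ∧ g (e i) = b := fun i =>
    ht (hfin.mem_toFinset.mp (hfin.toFinset.orderEmbOfFin_mem hcard i))
  have h01 : e 0 < e 1 := e.strictMono (by decide)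
  have h12 : e 1 < e 2 := e.strictMono (by decide)
  have h23 : e 2 < e 3 := e.strictMono (by decide)
  have key : ∀ x ∈ A, e 0 < x → x < e 3 → f x = b := by
    intro x hx h1 h2
    have a1 := hg (he 0).1 (subset_closure hx) h1.le
    have a2 := hg (subset_closure hx) (he 3).1 h2.le
    rw [(he 0).2] at a1
    rw [(he 3).2] at a2
    rw [← hgf x hx]
    exact le_antisymm a1 a2
  have near : ∀ x ∈ closure A, ∀ l r, l < x → x < r → ∃ a ∈ A, l < a ∧ a < r := by
    intro x hx l r h1 h2
    obtain ⟨a, ha, haA⟩ := mem_closure_iff.mp hx (Set.Ioo l r) isOpen_Ioo ⟨h1, h2⟩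
    exact ⟨a, haA, ha.1, ha.2⟩
  obtain ⟨p, hp, p1, p2⟩ := near _ (he 1).1 _ _ h01 h12
  obtain ⟨q, hq, q1, q2⟩ := near _ (he 2).1 _ _ h12 h23
  obtain ⟨r, hr, r1, r2⟩ := near _ (he 1).1 _ _ h01 q1
  have hqb := key q hq (h01.trans q1) q2
  have hrb := key r hr r1 (r2.trans q2)
  have := hf hr hq r2
  linarith
end

section
/- Let E ⊆ ℝ have the following property: for every n ≥ 1 and every uncountable A ⊆ Eⁿ, there is no one-to-one function f : A → E that is continuous with respect to the Euclidean topology and satisfies f(z₁,…,zₙ) ∉ {z₁,…,zₙ} for every (z₁,…,zₙ) ∈ A. Then E is entangled. -/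
/-- A family of `n`-tuples is pairwise disjoint if distinct tuples share no
coordinate values. -/
def PairwiseDisjointTuples {n : ℕ} (A : Set (Fin n → ℝ)) : Prop :=
  ∀ x ∈ A, ∀ y ∈ A, x ≠ y → ∀ i j, x i ≠ y j

/-- `L ⊆ ℝ` is `n`-entangled: for every family `A ⊆ Lⁿ` of pairwise disjoint
`n`-tuples of distinct elements with `|A| = ℵ₁` and every `s ∈ 2ⁿ` there are
distinct `x, y ∈ A` with `x i < y i ↔ s i = 0` for all `i`. -/
def NEntangled (L : Set ℝ) (n : ℕ) : Prop :=
  ∀ A : Set (Fin n → ℝ),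
    (∀ x ∈ A, ∀ i, x i ∈ L) →
    (∀ x ∈ A, Function.Injective x) →
    PairwiseDisjointTuples A →
    Cardinal.mk A = Cardinal.aleph 1 →
    ∀ s : Fin n → Fin 2, ∃ x ∈ A, ∃ y ∈ A, x ≠ y ∧ ∀ i, (x i < y i ↔ s i = 0)

/-- `L ⊆ ℝ` is entangled if it is `n`-entangled for every `n ≥ 1`. -/
def Entangled (L : Set ℝ) : Prop := ∀ n : ℕ, 1 ≤ n → NEntangled L n

open Filter Topology in
theorem stmt7_freq {α : Type*} [TopologicalSpace α] (f : α → ℝ) (B : Set α) (z : α)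
    (h : ¬ ContinuousWithinAt f B z) :
    ∃ q : ℚ, (f z < q ∧ ∃ᶠ y in 𝓝[B] z, (q:ℝ) < f y) ∨
      ((q:ℝ) < f z ∧ ∃ᶠ y in 𝓝[B] z, f y < q) := by
  unfold ContinuousWithinAt at h
  rw [tendsto_order] at h
  rw [not_and_or] at h
  push Not at h
  rcases h with ⟨a, ha, hf⟩ | ⟨a, ha, hf⟩
  · obtain ⟨q, h1, h2⟩ := exists_rat_btwn ha
    refine ⟨q, Or.inr ⟨h2, ?_⟩⟩
    exact hf.mono (fun y hy => lt_of_le_of_lt (by simpa using hy) h1)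
  · obtain ⟨q, h1, h2⟩ := exists_rat_btwn ha
    refine ⟨q, Or.inl ⟨h1, ?_⟩⟩
    exact hf.mono (fun y hy => lt_of_lt_of_le h2 (by simpa using hy))

def stmt7R {n : ℕ} (s : Fin n → Fin 2) (x y : Fin n → ℝ) : Prop :=
  ∀ i, (s i = 0 → x i < y i) ∧ (s i ≠ 0 → y i < x i)

open Filter Topology in
theorem stmt7R_right {n : ℕ} (s : Fin n → Fin 2) (x z : Fin n → ℝ) (h : stmt7R s x z) :
    ∀ᶠ y in 𝓝 z, stmt7R s x y := by
  unfold stmt7R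
  rw [eventually_all]
  intro i
  have hc : Tendsto (fun y : Fin n → ℝ => y i) (𝓝 z) (𝓝 (z i)) :=
    (continuous_apply i).tendsto z
  by_cases hs : s i = 0
  · filter_upwards [hc.eventually (lt_mem_nhds ((h i).1 hs))] with y hy
    exact ⟨fun _ => hy, fun h => absurd hs h⟩
  · filter_upwards [hc.eventually (gt_mem_nhds ((h i).2 hs))] with y hy
    exact ⟨fun h => absurd h hs, fun _ => hy⟩

open Filter Topology in
theorem stmt7R_left {n : ℕ} (s : Fin n → Fin 2) (x z : Fin n → ℝ) (h : stmt7R s x z) :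
    ∀ᶠ y in 𝓝 x, stmt7R s y z := by
  unfold stmt7R
  rw [eventually_all]
  intro i
  have hc : Tendsto (fun y : Fin n → ℝ => y i) (𝓝 x) (𝓝 (x i)) :=
    (continuous_apply i).tendsto x
  by_cases hs : s i = 0
  · filter_upwards [hc.eventually (gt_mem_nhds ((h i).1 hs))] with y hy
    exact ⟨fun _ => hy, fun h => absurd hs h⟩
  · filter_upwards [hc.eventually (lt_mem_nhds ((h i).2 hs))] with y hy
    exact ⟨fun h => absurd h hs, fun _ => hy⟩

def stmt7P (E : Set ℝ) (n : ℕ) : Prop :=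
  ∀ A : Set (Fin n → ℝ), (∀ x ∈ A, ∀ i, x i ∈ E) → (∀ x ∈ A, Function.Injective x) →
    PairwiseDisjointTuples A → ¬ A.Countable →
    ∀ s : Fin n → Fin 2, ∃ x ∈ A, ∃ y ∈ A, stmt7R s x y

open Filter Topology in
theorem stmt7_step (E : Set ℝ)
    (hE : ∀ n : ℕ, 1 ≤ n → ∀ A : Set (Fin n → ℝ),
      (∀ x ∈ A, ∀ i, x i ∈ E) → ¬A.Countable →
      ¬∃ f : (Fin n → ℝ) → ℝ, Set.InjOn f A ∧ ContinuousOn f A ∧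
        Set.MapsTo f A E ∧ ∀ z ∈ A, ∀ i, f z ≠ z i)
    (n : ℕ) (hn : 1 ≤ n) (ih : stmt7P E n) : stmt7P E (n+1) := by
  intro A hAE hinj hdis hunc s
  by_contra hcon
  push Not at hcon
  have hπ : Set.InjOn (fun a : Fin (n+1) → ℝ => Fin.tail a) A := by
    intro a ha b hb hab
    by_contra hne
    exact hdis a ha b hb hne (Fin.succ ⟨0, hn⟩) (Fin.succ ⟨0, hn⟩) (congrFun hab ⟨0, hn⟩)
  set B : Set (Fin n → ℝ) := (fun a : Fin (n+1) → ℝ => Fin.tail a) '' A with hB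
  obtain ⟨g, hg⟩ : ∃ g : (Fin n → ℝ) → (Fin (n+1) → ℝ), ∀ z ∈ B, g z ∈ A ∧ Fin.tail (g z) = z := by
    classical
    refine ⟨fun z => if h : z ∈ B then h.choose else 0, fun z hz => ?_⟩
    simp only [hz, dif_pos]
    exact hz.choose_spec
  have hgs : ∀ z ∈ B, ∀ i : Fin n, g z i.succ = z i := fun z hz i => congrFun (hg z hz).2 i
  have hBunc : ¬ B.Countable := fun h => hunc (Set.countable_of_injective_of_countable_image hπ h)
  set f : (Fin n → ℝ) → ℝ := fun z => g z 0 with hf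
  have hBE : ∀ x ∈ B, ∀ i, x i ∈ E := fun x hx i => by
    rw [← hgs x hx]; exact hAE _ (hg x hx).1 _
  have hBinj : ∀ x ∈ B, Function.Injective x := fun x hx i j hij => by
    rw [← hgs x hx, ← hgs x hx] at hij
    exact Fin.succ_injective _ (hinj _ (hg x hx).1 hij)
  have hgne : ∀ x ∈ B, ∀ y ∈ B, x ≠ y → g x ≠ g y := fun x hx y hy hxy h => hxy (by
    rw [← (hg x hx).2, ← (hg y hy).2, h])
  have hBdis : PairwiseDisjointTuples B := fun x hx y hy hxy i j => by
    rw [← hgs x hx, ← hgs y hy]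
    exact hdis _ (hg x hx).1 _ (hg y hy).1 (hgne x hx y hy hxy) _ _
  -- no pair
  have key : ∀ x ∈ B, ∀ y ∈ B, stmt7R (Fin.tail s) x y →
      ¬ ((s 0 = 0 → f x < f y) ∧ (s 0 ≠ 0 → f y < f x)) := by
    intro x hx y hy hR h0
    apply hcon _ (hg x hx).1 _ (hg y hy).1
    intro i
    refine Fin.cases h0 (fun i => ?_) i
    rw [hgs x hx, hgs y hy]
    exact hR i
  have sub : ∀ U : Set (Fin n → ℝ), U ⊆ B → ¬ U.Countable →
      ∃ x ∈ U, ∃ y ∈ U, stmt7R (Fin.tail s) x y := fun U hU hc =>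
    ih U (fun x hx => hBE x (hU hx)) (fun x hx => hBinj x (hU hx))
      (fun x hx y hy => hBdis x (hU hx) y (hU hy)) hc _
  have hR : ∀ x ∈ B, ∀ z ∈ B, stmt7R (Fin.tail s) x z → ∀ p : (Fin n → ℝ) → Prop,
      (∃ᶠ y in 𝓝[B] z, p y) → ∃ y ∈ B, p y ∧ stmt7R (Fin.tail s) x y := by
    intro x hx z hz h p hp
    obtain ⟨y, hy⟩ := (hp.and_eventually ((eventually_mem_nhdsWithin).and
      (mem_nhdsWithin_of_mem_nhds (stmt7R_right _ x z h)))).exists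
    exact ⟨y, hy.2.1, hy.1, hy.2.2⟩
  have hL : ∀ x ∈ B, ∀ z ∈ B, stmt7R (Fin.tail s) x z → ∀ p : (Fin n → ℝ) → Prop,
      (∃ᶠ y in 𝓝[B] x, p y) → ∃ y ∈ B, p y ∧ stmt7R (Fin.tail s) y z := by
    intro x hx z hz h p hp
    obtain ⟨y, hy⟩ := (hp.and_eventually ((eventually_mem_nhdsWithin).and
      (mem_nhdsWithin_of_mem_nhds (stmt7R_left _ x z h)))).exists
    exact ⟨y, hy.2.1, hy.1, hy.2.2⟩
  have hU : ∀ q : ℚ, {z | z ∈ B ∧ f z < q ∧ ∃ᶠ y in 𝓝[B] z, (q:ℝ) < f y}.Countable := by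
    intro q
    by_contra hc
    obtain ⟨x, hx, z, hz, hxz⟩ := sub _ (fun z hz => hz.1) hc
    by_cases hs : s 0 = 0
    · obtain ⟨y, hy, hp, hr⟩ := hR x hx.1 z hz.1 hxz _ hz.2.2
      exact key x hx.1 y hy hr ⟨fun _ => hx.2.1.trans hp, fun h => absurd hs h⟩
    · obtain ⟨y, hy, hp, hr⟩ := hL x hx.1 z hz.1 hxz _ hx.2.2
      exact key y hy z hz.1 hr ⟨fun h => absurd h hs, fun _ => hz.2.1.trans hp⟩
  have hV : ∀ q : ℚ, {z | z ∈ B ∧ (q:ℝ) < f z ∧ ∃ᶠ y in 𝓝[B] z, f y < q}.Countable := by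
    intro q
    by_contra hc
    obtain ⟨x, hx, z, hz, hxz⟩ := sub _ (fun z hz => hz.1) hc
    by_cases hs : s 0 = 0
    · obtain ⟨y, hy, hp, hr⟩ := hL x hx.1 z hz.1 hxz _ hx.2.2
      exact key y hy z hz.1 hr ⟨fun _ => hp.trans hz.2.1, fun h => absurd hs h⟩
    · obtain ⟨y, hy, hp, hr⟩ := hR x hx.1 z hz.1 hxz _ hz.2.2
      exact key x hx.1 y hy hr ⟨fun h => absurd h hs, fun _ => hp.trans hx.2.1⟩
  have hD : {z | z ∈ B ∧ ¬ ContinuousWithinAt f B z}.Countable := by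
    refine ((Set.countable_iUnion hU).union (Set.countable_iUnion hV)).mono ?_
    rintro z ⟨hz, hd⟩
    obtain ⟨q, h | h⟩ := stmt7_freq f B z hd
    · exact Or.inl (Set.mem_iUnion.2 ⟨q, hz, h⟩)
    · exact Or.inr (Set.mem_iUnion.2 ⟨q, hz, h⟩)
  have hCsub : B \ {z | z ∈ B ∧ ¬ ContinuousWithinAt f B z} ⊆ B := Set.diff_subset
  refine hE n hn (B \ {z | z ∈ B ∧ ¬ ContinuousWithinAt f B z})
    (fun x hx => hBE x (hCsub hx)) ?_ ⟨f, ?_, ?_, ?_, ?_⟩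
  · intro h
    exact hBunc ((h.union hD).mono (fun x hx => by
      by_cases h : x ∈ {z | z ∈ B ∧ ¬ ContinuousWithinAt f B z}
      · exact Or.inr h
      · exact Or.inl ⟨hx, h⟩))
  · intro x hx y hy hxy
    by_contra hne
    exact hdis _ (hg x hx.1).1 _ (hg y hy.1).1 (hgne x hx.1 y hy.1 hne) 0 0 hxy
  · intro x hx
    have : ContinuousWithinAt f B x := by
      by_contra h
      exact hx.2 ⟨hx.1, h⟩
    exact this.mono hCsub
  · intro x hx
    exact hAE _ (hg x hx.1).1 0
  · intro z hz i h
    rw [← hgs z hz.1] at h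
    exact (Fin.succ_ne_zero i) (hinj _ (hg z hz.1).1 h).symm

theorem stmt7_base (E : Set ℝ) : stmt7P E 1 := by
  intro A _ _ hdis hunc s
  have hnt : A.Nontrivial := by
    by_contra h
    exact hunc (Set.not_nontrivial_iff.1 h).countable
  obtain ⟨x, hx, y, hy, hxy⟩ := hnt
  have hne := hdis x hx y hy hxy 0 0
  have main : ∀ a ∈ A, ∀ b ∈ A, a 0 < b 0 → ∃ x ∈ A, ∃ y ∈ A, stmt7R s x y := by
    intro a ha b hb hab
    by_cases hs : s 0 = 0
    · refine ⟨a, ha, b, hb, fun i => ?_⟩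
      rw [Subsingleton.elim i 0]
      exact ⟨fun _ => hab, fun h => absurd hs h⟩
    · refine ⟨b, hb, a, ha, fun i => ?_⟩
      rw [Subsingleton.elim i 0]
      exact ⟨fun h => absurd h hs, fun _ => hab⟩
  rcases lt_or_gt_of_ne hne with h | h
  · exact main x hx y hy h
  · exact main y hy x hx h

/-- If for every `n ≥ 1` and every uncountable `A ⊆ Eⁿ` there is
no one-to-one Euclidean-continuous `f : A → E` with `f z ∉ {z₁, …, zₙ}` for all
`z ∈ A`, then `E` is entangled. -/
theorem stmt7 (E : Set ℝ)
    (hE : ∀ n : ℕ, 1 ≤ n → ∀ A : Set (Fin n → ℝ),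
      (∀ x ∈ A, ∀ i, x i ∈ E) → ¬A.Countable →
      ¬∃ f : (Fin n → ℝ) → ℝ, Set.InjOn f A ∧ ContinuousOn f A ∧
        Set.MapsTo f A E ∧ ∀ z ∈ A, ∀ i, f z ≠ z i) :
    Entangled E := by
  intro n hn A hAE hinj hdis hcard s
  have hP : stmt7P E n := Nat.le_induction (m := 1) (P := fun n _ => stmt7P E n)
    (stmt7_base E) (fun n hn ih => stmt7_step E hE n hn ih) n hn
  have hunc : ¬ A.Countable := by
    intro h
    have h1 := Cardinal.mk_le_aleph0_iff.2 h.to_subtype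
    rw [hcard] at h1
    exact absurd h1 (not_le.2 (by
      rw [← Cardinal.aleph_zero]; exact Cardinal.aleph_lt_aleph.2 zero_lt_one))
  obtain ⟨x, hx, y, hy, hxy⟩ := hP A hAE hinj hdis hunc s
  refine ⟨x, hx, y, hy, ?_, fun i => ⟨fun h => ?_, fun h => (hxy i).1 h⟩⟩
  · rintro rfl
    have := hxy ⟨0, hn⟩
    by_cases hs : s ⟨0, hn⟩ = 0
    · exact lt_irrefl _ (this.1 hs)
    · exact lt_irrefl _ (this.2 hs)
  · by_contra hs
    exact lt_asymm h ((hxy i).2 hs)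
end

section
/- Assume the Continuum Hypothesis. Then there exists an uncountable set E ⊆ ℝ such that: (1) for every n ≥ 1 and every uncountable A ⊆ Eⁿ, there is no one-to-one function f : A → E that is continuous with respect to the Euclidean topology and satisfies f(z₁,…,zₙ) ∉ {z₁,…,zₙ} for every (z₁,…,zₙ) ∈ A; and (2) ℚ ⊆ E, ℚ is not a relative Gδ-set in E with respect to the Euclidean subspace topology, and E is concentrated on ℚ. -/
/-- The Continuum Hypothesis: `2^ℵ₀ = ℵ₁`. -/
def ContinuumHypothesis : Prop :=
  Cardinal.continuum.{0} = Cardinal.aleph.{0} 1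

open Set TopologicalSpace

/-- Substitute `t` for the coordinates in `S`. -/
noncomputable def subst8 {n : ℕ} (S : Finset (Fin n)) (z : Fin n → ℝ) (t : ℝ) : Fin n → ℝ :=
  fun i => if i ∈ S then t else z i

/-- Category-quantified relation. -/
def quant8 {n : ℕ} (V : ℕ → Set ((Fin n → ℝ) × ℝ)) (I : Set ℝ) (S : Finset (Fin n)) :
    Set ((Fin n → ℝ) × ℝ) :=
  {p | ∀ m, ∀ J ∈ countableBasis ℝ, (J ∩ I).Nonempty → ∃ t ∈ J, (subst8 S p.1 t, p.2) ∈ V m}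

/-- Functional relation. -/
def Fnl8 {n : ℕ} (R : Set ((Fin n → ℝ) × ℝ)) : Prop :=
  ∀ z y y', (z, y) ∈ R → (z, y') ∈ R → y = y'

/-- The bad set at a stage. -/
def bad8 {W : Type} [Preorder W] (F : ∀ n : ℕ, W → Set ((Fin n → ℝ) × ℝ)) (a : W) (P : Set ℝ) :
    Set ℝ :=
  P ∪ (⋃ (n : ℕ), ⋃ b : Set.Iio a, ⋃ z : Fin n → P, ⋃ _ : IsMeagre
        {t : ℝ | ((fun i => (z i : ℝ)), t) ∈ F n b}, {t : ℝ | ((fun i => (z i : ℝ)), t) ∈ F n b}) ∪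
    (⋃ (n : ℕ), ⋃ b : Set.Iio a, ⋃ z : Fin n → P, ⋃ y : P, ⋃ S : Finset (Fin n), ⋃ _ : IsMeagre
        {t : ℝ | (subst8 S (fun i => (z i : ℝ)) t, (y : ℝ)) ∈ F n b},
        {t : ℝ | (subst8 S (fun i => (z i : ℝ)) t, (y : ℝ)) ∈ F n b})

theorem meagre_countable8 {P : Set ℝ} (hP : P.Countable) : IsMeagre P := by
  have h : IsMeagre (⋃ x ∈ P, ({x} : Set ℝ)) :=
    isMeagre_biUnion hP fun x _ => by
      apply IsNowhereDense.isMeagre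
      simp [IsNowhereDense]
  simpa using h

theorem bad8_meagre {W : Type} [Preorder W] (F : ∀ n : ℕ, W → Set ((Fin n → ℝ) × ℝ)) (a : W)
    (ha : (Set.Iio a).Countable) (P : Set ℝ) (hP : P.Countable) : IsMeagre (bad8 F a P) := by
  have := hP.to_subtype
  have := ha.to_subtype
  unfold bad8
  refine ((meagre_countable8 hP).union ?_).union ?_
  · exact isMeagre_iUnion fun n => isMeagre_iUnion fun b => isMeagre_iUnion fun z =>
      isMeagre_iUnion fun h => h
  · exact isMeagre_iUnion fun n => isMeagre_iUnion fun b => isMeagre_iUnion fun z =>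
      isMeagre_iUnion fun y => isMeagre_iUnion fun S => isMeagre_iUnion fun h => h

theorem rec8 {W : Type} [Preorder W] [WellFoundedLT W] (pick : W → Set ℝ → ℝ) :
    ∃ x : W → ℝ, ∀ a, x a = pick a (x '' Set.Iio a) := by
  have wf : WellFounded (fun a b : W => a < b) := wellFounded_lt
  let x : W → ℝ := wf.fix (fun a ih => pick a {t | ∃ b, ∃ h : b < a, ih b h = t})
  refine ⟨x, fun a => ?_⟩
  have := wf.fix_eq (fun a (ih : ∀ b, b < a → ℝ) => pick a {t | ∃ b, ∃ h : b < a, ih b h = t}) a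
  refine this.trans ?_
  congr 1
  ext t
  simp only [mem_ofPred_eq, mem_image, mem_Iio, exists_prop]
  rfl

theorem continuous_subst8 {n : ℕ} (S : Finset (Fin n)) :
    Continuous (fun q : (Fin n → ℝ) × ℝ => subst8 S q.1 q.2) := by
  unfold subst8
  refine continuous_pi fun i => ?_
  by_cases h : i ∈ S <;> simp only [h, if_true, if_false] <;> fun_prop

theorem quant8_isGδ {n : ℕ} (V : ℕ → Set ((Fin n → ℝ) × ℝ)) (hV : ∀ m, IsOpen (V m))
    (I : Set ℝ) (S : Finset (Fin n)) : IsGδ (quant8 V I S) := by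
  have : quant8 V I S = ⋂ m, ⋂ J ∈ countableBasis ℝ, ⋂ _ : (J ∩ I).Nonempty,
      ⋃ t ∈ J, {p : (Fin n → ℝ) × ℝ | (subst8 S p.1 t, p.2) ∈ V m} := by
    ext p; simp [quant8]
  rw [this]
  refine .iInter fun m => .biInter (countable_countableBasis ℝ) fun J _ => .iInter fun _ => ?_
  refine (isOpen_biUnion fun t _ => ?_).isGδ
  refine (hV m).preimage ?_
  exact ((continuous_subst8 S).comp (continuous_fst.prodMk continuous_const)).prodMk continuous_snd

theorem dense8 {V : ℕ → Set ℝ} (hV : ∀ m, IsOpen (V m)) {I : Set ℝ}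
    (h : ∀ m, ∀ J ∈ countableBasis ℝ, (J ∩ I).Nonempty → ∃ t ∈ J, t ∈ V m) :
    Dense (⋂ m, (V m ∪ (closure I)ᶜ)) := by
  refine dense_iInter_of_isOpen (fun m => (hV m).union isClosed_closure.isOpen_compl) fun m => ?_
  rw [(isBasis_countableBasis ℝ).dense_iff]
  intro J hJ hne
  by_cases hI : (J ∩ I).Nonempty
  · obtain ⟨t, h1, h2⟩ := h m J hJ hI
    exact ⟨t, h1, Or.inl h2⟩
  · obtain ⟨t, ht⟩ := hne
    refine ⟨t, ht, Or.inr fun hc => hI ?_⟩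
    exact mem_closure_iff.1 hc J (isOpen_of_mem_countableBasis hJ) ht

theorem quant8_fnl {n : ℕ} (V : ℕ → Set ((Fin n → ℝ) × ℝ)) (hV : ∀ m, IsOpen (V m))
    (I : Set ℝ) (hI : IsOpen I) (hne : I.Nonempty) (S : Finset (Fin n))
    (hR : Fnl8 (⋂ m, V m)) : Fnl8 (quant8 V I S) := by
  intro z y y' h h'
  have op : ∀ y m, IsOpen {t : ℝ | (subst8 S z t, y) ∈ V m} := fun y m =>
    (hV m).preimage
      (((continuous_subst8 S).comp (continuous_const.prodMk continuous_id)).prodMk continuous_const)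
  have d1 := dense8 (op y) (I := I) h
  have d2 := dense8 (op y') (I := I) h'
  have g : ∀ y, IsGδ (⋂ m, ({t : ℝ | (subst8 S z t, y) ∈ V m} ∪ (closure I)ᶜ)) := fun y =>
    .iInter fun m => ((op y m).union isClosed_closure.isOpen_compl).isGδ
  obtain ⟨t, htI, ht1, ht2⟩ := (d1.inter_of_Gδ (g y) (g y') d2).inter_open_nonempty I hI hne
  rw [mem_iInter] at ht1 ht2
  have hc : t ∈ closure I := subset_closure htI
  refine hR (subst8 S z t) y y' (mem_iInter.2 fun m => ?_) (mem_iInter.2 fun m => ?_)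
  · exact (ht1 m).resolve_right fun h => h hc
  · exact (ht2 m).resolve_right fun h => h hc

theorem quant8_of {n : ℕ} (V : ℕ → Set ((Fin n → ℝ) × ℝ))
    (S : Finset (Fin n)) (z : Fin n → ℝ) (y : ℝ)
    (h : ¬ IsMeagre {t : ℝ | (subst8 S z t, y) ∈ ⋂ m, V m}) :
    ∃ I ∈ countableBasis ℝ, (z, y) ∈ quant8 V I S := by
  have h1 : ¬ IsNowhereDense {t : ℝ | (subst8 S z t, y) ∈ ⋂ m, V m} := fun h' => h h'.isMeagre
  rw [IsNowhereDense, ← ne_eq, ← nonempty_iff_ne_empty] at h1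
  obtain ⟨x, hx⟩ := h1
  obtain ⟨I, hI, hxI, hsub⟩ := (isBasis_countableBasis ℝ).exists_subset_of_mem_open hx isOpen_interior
  refine ⟨I, hI, fun m J hJ ⟨u, huJ, huI⟩ => ?_⟩
  obtain ⟨t, htJ, ht⟩ := mem_closure_iff.1 (interior_subset (hsub huI)) J
    (isOpen_of_mem_countableBasis hJ) huJ
  exact ⟨t, htJ, mem_iInter.1 ht m⟩

theorem extend8 {n : ℕ} (A : Set (Fin n → ℝ)) (f : (Fin n → ℝ) → ℝ) (hf : ContinuousOn f A) :
    ∃ R : Set ((Fin n → ℝ) × ℝ), IsGδ R ∧ Fnl8 R ∧ ∀ z ∈ A, (z, f z) ∈ R := by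
  let O : ℕ → Set (Fin n → ℝ) := fun m =>
    ⋃₀ {U | IsOpen U ∧ ∀ u ∈ U ∩ A, ∀ v ∈ U ∩ A, dist (f u) (f v) ≤ 1 / ((m : ℝ) + 1)}
  refine ⟨closure ((fun z => (z, f z)) '' A) ∩ ⋂ m, Prod.fst ⁻¹' O m, ?_, ?_, ?_⟩
  · refine isClosed_closure.isGδ.inter (.iInter fun m => IsOpen.isGδ ?_)
    exact (isOpen_sUnion fun U hU => hU.1).preimage continuous_fst
  · intro z y y' h h'
    refine dist_le_zero.1 (le_of_forall_pos_le_add fun ε hε => ?_)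
    obtain ⟨m, hm⟩ := exists_nat_one_div_lt (show 0 < ε / 3 by positivity)
    obtain ⟨U, ⟨hU, hd⟩, hzU⟩ := mem_iInter.1 h.2 m
    have key : ∀ y, (z, y) ∈ closure ((fun z => (z, f z)) '' A) →
        ∃ u ∈ U ∩ A, dist y (f u) < ε / 3 := by
      intro y hy
      obtain ⟨p, ⟨hp1, hp2⟩, u, hu, rfl⟩ := mem_closure_iff.1 hy (U ×ˢ Metric.ball y (ε / 3))
        (hU.prod Metric.isOpen_ball) ⟨hzU, Metric.mem_ball_self (by positivity)⟩
      exact ⟨u, ⟨hp1, hu⟩, by simpa [dist_comm] using hp2⟩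
    obtain ⟨u, hu, hu'⟩ := key y h.1
    obtain ⟨v, hv, hv'⟩ := key y' h'.1
    have h1 := hd u hu v hv
    have h2 := dist_triangle4 y (f u) (f v) y'
    rw [dist_comm (f v)] at h2
    linarith
  · intro z hz
    refine ⟨subset_closure ⟨z, hz, rfl⟩, mem_iInter.2 fun m => ?_⟩
    have hpos : (0:ℝ) < 1 / ((m : ℝ) + 1) / 2 := by positivity
    have := hf z hz (Metric.ball_mem_nhds (f z) hpos)
    obtain ⟨U, hU, hzU, hsub⟩ := mem_nhdsWithin.1 this
    refine ⟨U, ⟨hU, fun u hu v hv => ?_⟩, hzU⟩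
    have h1 : dist (f u) (f z) < _ := hsub hu
    have h2 : dist (f v) (f z) < _ := hsub hv
    have := dist_triangle_right (f u) (f v) (f z)
    linarith

theorem enum8 {W : Type} (hW : Cardinal.mk W = Cardinal.continuum) (n : ℕ) :
    ∃ F : W → Set ((Fin n → ℝ) × ℝ), ∀ R, IsGδ R → ∃ b, F b = R := by
  have h1 : Cardinal.mk {R : Set ((Fin n → ℝ) × ℝ) | IsGδ R} ≤ Cardinal.mk W := by
    rw [hW]
    have h2 := MeasurableSpace.cardinal_measurableSet_le_continuum
      (s := countableBasis ((Fin n → ℝ) × ℝ))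
      (((countable_countableBasis _).le_aleph0).trans Cardinal.aleph0_le_continuum)
    refine le_trans (Cardinal.mk_le_mk_of_subset ?_) h2
    intro R hR
    have := hR.measurableSet
    rw [BorelSpace.measurable_eq (α := (Fin n → ℝ) × ℝ),
      (isBasis_countableBasis ((Fin n → ℝ) × ℝ)).borel_eq_generateFrom] at this
    exact this
  obtain ⟨g⟩ := Cardinal.le_def _ _ |>.1 h1
  have : Nonempty {R : Set ((Fin n → ℝ) × ℝ) | IsGδ R} := ⟨⟨univ, IsGδ.univ⟩⟩
  refine ⟨fun w => (Function.invFun g w).1, fun R hR => ⟨g ⟨R, hR⟩, ?_⟩⟩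
  simp [Function.leftInverse_invFun g.injective ⟨R, hR⟩]

theorem main8 {W : Type} [LinearOrder W] (hWc : ∀ a : W, (Set.Iio a).Countable)
    (F : ∀ n : ℕ, W → Set ((Fin n → ℝ) × ℝ)) (hF : ∀ n R, IsGδ R → ∃ b, F n b = R)
    (x : W → ℝ) (hx : ∀ a, x a ∉ bad8 F a (range ((↑) : ℚ → ℝ) ∪ x '' Set.Iio a))
    (n : ℕ) (D : Finset (Fin n)) : ∀ (R : Set ((Fin n → ℝ) × ℝ)), IsGδ R → Fnl8 R →
    {y | y ∈ range ((↑) : ℚ → ℝ) ∪ range x ∧ ∃ z, (z, y) ∈ R ∧ (∀ i ∉ D, z i = 0) ∧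
      ∀ i ∈ D, z i ∈ range ((↑) : ℚ → ℝ) ∪ range x ∧ z i ≠ y}.Countable := by
  induction D using Finset.strongInduction with
  | H D ih =>
  intro R hR hfn
  obtain ⟨b, hb⟩ := hF n R hR
  obtain ⟨V, hV, rfl⟩ := hR.eq_iInter_nat
  have hIic : (Set.Iic b).Countable := by
    rw [← Set.Iio_insert]; exact (hWc b).insert b
  have hcount : (range ((↑) : ℚ → ℝ) ∪ x '' Set.Iic b ∪ ⋃ S : Finset (Fin n), ⋃ _ : D \ S ⊂ D,
      ⋃ I ∈ countableBasis ℝ,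
      {y | y ∈ range ((↑) : ℚ → ℝ) ∪ range x ∧ ∃ z, (z, y) ∈ quant8 V I S ∧
        (∀ i ∉ D \ S, z i = 0) ∧
        ∀ i ∈ D \ S, z i ∈ range ((↑) : ℚ → ℝ) ∪ range x ∧ z i ≠ y}).Countable := by
    refine ((countable_range _).union (hIic.image x)).union ?_
    refine countable_iUnion fun S => countable_iUnion fun hS =>
      (countable_countableBasis ℝ).biUnion fun I hI => ?_
    exact ih _ hS _ (quant8_isGδ V hV I S) (quant8_fnl V hV I (isOpen_of_mem_countableBasis hI)
      (nonempty_of_mem_countableBasis hI) S hfn)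
  refine hcount.mono ?_
  rintro y ⟨hyE, z, hzR, hz0, hzD⟩
  by_cases hyQ : y ∈ range ((↑) : ℚ → ℝ)
  · exact Or.inl (Or.inl hyQ)
  obtain ⟨c, rfl⟩ := hyE.resolve_left hyQ
  by_cases hcb : c ≤ b
  · exact Or.inl (Or.inr ⟨c, hcb, rfl⟩)
  right
  push Not at hcb
  have h0Q : ∀ i ∉ D, z i ∈ range ((↑) : ℚ → ℝ) := fun i hi => ⟨0, by simp [hz0 i hi]⟩
  have hd : ∀ i, ∃ d, z i ∈ range ((↑) : ℚ → ℝ) ∪ x '' Set.Iio c ∨ (c < d ∧ z i = x d) := by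
    intro i
    by_cases hi : i ∈ D
    · rcases (hzD i hi).1 with h | ⟨d, hd⟩
      · exact ⟨c, Or.inl (Or.inl h)⟩
      · refine ⟨d, ?_⟩
        rcases lt_trichotomy d c with h | h | h
        · exact Or.inl (Or.inr ⟨d, h, hd⟩)
        · subst h; exact absurd hd.symm (hzD i hi).2
        · exact Or.inr ⟨h, hd.symm⟩
    · exact ⟨c, Or.inl (Or.inl (h0Q i hi))⟩
  choose d hd using hd
  classical
  by_cases hall : ∀ i, z i ∈ range ((↑) : ℚ → ℝ) ∪ x '' Set.Iio c
  · exfalso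
    apply hx c
    refine Or.inl (Or.inr ?_)
    simp only [mem_iUnion]
    refine ⟨n, ⟨b, hcb⟩, fun i => ⟨z i, hall i⟩, ?_, ?_⟩
    · simp only [hb]
      refine meagre_countable8 (Set.Subsingleton.countable ?_)
      intro t ht t' ht'
      exact hfn z t t' ht ht'
    · simp only [hb]; exact hzR
  push Not at hall
  obtain ⟨i₁, hi₁⟩ := hall
  obtain ⟨i₀, hi₀, hmax⟩ := Finset.exists_max_image
    (Finset.univ.filter fun i => z i ∉ range ((↑) : ℚ → ℝ) ∪ x '' Set.Iio c) d
    ⟨i₁, by simpa using hi₁⟩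
  rw [Finset.mem_filter] at hi₀
  obtain ⟨hca, hza⟩ := (hd i₀).resolve_left hi₀.2
  set a := d i₀ with ha
  let S : Finset (Fin n) := Finset.univ.filter fun i => z i = x a
  have hoff : ∀ i, i ∉ S → z i ∈ range ((↑) : ℚ → ℝ) ∪ x '' Set.Iio a := by
    intro i hi
    rcases em (z i ∈ range ((↑) : ℚ → ℝ) ∪ x '' Set.Iio c) with h | h
    · exact h.imp id fun ⟨e, he, h⟩ => ⟨e, lt_trans he hca, h⟩
    · have h1 := hmax i (by simpa using h)
      obtain ⟨h2, h3⟩ := (hd i).resolve_left h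
      refine Or.inr ⟨d i, lt_of_le_of_ne h1 fun h => hi ?_, h3.symm⟩
      simp only [S, Finset.mem_filter, Finset.mem_univ, true_and]
      rw [h3, h]
  let z' : Fin n → ℝ := fun i => if i ∈ S then 0 else z i
  have hz' : ∀ i, z' i ∈ range ((↑) : ℚ → ℝ) ∪ x '' Set.Iio a := by
    intro i
    by_cases h : i ∈ S
    · exact Or.inl ⟨0, by simp [z', h]⟩
    · simp only [z', h, if_false]; exact hoff i h
  have hsub : subst8 S z' (x a) = z := by
    funext i
    by_cases h : i ∈ S
    · simp only [subst8, h, if_true]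
      simpa [S, eq_comm] using h
    · simp [subst8, z', h]
  have hnm : ¬ IsMeagre {t : ℝ | (subst8 S z' t, x c) ∈ ⋂ m, V m} := by
    intro hm
    apply hx a
    refine Or.inr ?_
    simp only [mem_iUnion]
    refine ⟨n, ⟨b, hcb.trans hca⟩, fun i => ⟨z' i, hz' i⟩, ⟨x c, Or.inr ⟨c, hca, rfl⟩⟩, S, ?_, ?_⟩
    · simp only [hb]; exact hm
    · simp only [hb, mem_ofPred_eq, hsub]; exact hzR
  obtain ⟨I, hI, hq⟩ := quant8_of V S z' (x c) hnm
  have hi₀S : i₀ ∈ S := by simp [S, hza]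
  have hi₀D : i₀ ∈ D := by
    by_contra h
    exact hi₀.2 (Or.inl (h0Q i₀ h))
  simp only [mem_iUnion]
  refine ⟨S, ?_, I, hI, Or.inr ⟨c, rfl⟩, z', hq, ?_, ?_⟩
  · refine Finset.ssubset_iff_subset_ne.2 ⟨Finset.sdiff_subset, fun h => ?_⟩
    rw [← h] at hi₀D
    exact (Finset.mem_sdiff.1 hi₀D).2 hi₀S
  · intro i hi
    by_cases h : i ∈ S
    · simp [z', h]
    · simp only [z', h, if_false]
      exact hz0 i fun h' => hi (Finset.mem_sdiff.2 ⟨h', h⟩)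
  · intro i hi
    obtain ⟨h1, h2⟩ := Finset.mem_sdiff.1 hi
    simp only [z', h2, if_false]
    exact hzD i h1

/-- Under CH there is an uncountable `E ⊆ ℝ` such that (1) for
every `n ≥ 1` no uncountable `A ⊆ Eⁿ` admits a one-to-one Euclidean-continuous
`f : A → E` with `f z ∉ {z₁, …, zₙ}` for all `z ∈ A`; and (2) `ℚ ⊆ E`, `ℚ` is
not a relative `Gδ` in `E` (Euclidean subspace topology), and `E` is
concentrated on `ℚ`. -/
theorem stmt8 (hCH : ContinuumHypothesis) :
    ∃ E : Set ℝ, ¬E.Countable ∧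
      (∀ n : ℕ, 1 ≤ n → ∀ A : Set (Fin n → ℝ),
        (∀ x ∈ A, ∀ i, x i ∈ E) → ¬A.Countable →
        ¬∃ f : (Fin n → ℝ) → ℝ, Set.InjOn f A ∧ ContinuousOn f A ∧
          Set.MapsTo f A E ∧ ∀ z ∈ A, ∀ i, f z ≠ z i) ∧
      (Set.range ((↑) : ℚ → ℝ) ⊆ E ∧
        ¬ IsGδ (Subtype.val ⁻¹' Set.range ((↑) : ℚ → ℝ) : Set E) ∧
        ∀ U : Set ℝ, IsOpen U → Set.range ((↑) : ℚ → ℝ) ⊆ U →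
          (E \ U).Countable) := by
  let W : Type := (Cardinal.aleph.{0} 1).ord.ToType
  have hW : Cardinal.mk W = Cardinal.aleph 1 := Cardinal.mk_ord_toType _
  have hWc : ∀ a : W, (Set.Iio a).Countable := by
    intro a
    have h := Cardinal.mk_Iio_toType_ord_lt a
    rw [← Cardinal.le_aleph0_iff_set_countable]
    exact Order.lt_succ_iff.1 (h.trans_eq Cardinal.succ_aleph0.symm)
  have hWu : ¬ (univ : Set W).Countable := by
    intro h
    have h1 := Cardinal.le_aleph0_iff_set_countable.2 h
    rw [Cardinal.mk_univ, hW] at h1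
    exact absurd h1 (not_le.2 Cardinal.aleph0_lt_aleph_one)
  choose F hF using fun n => enum8 (hW.trans hCH.symm) n
  have hpick : ∀ (a : W) (P : Set ℝ), ∃ t : ℝ, P.Countable →
      t ∉ bad8 F a (range ((↑) : ℚ → ℝ) ∪ P) := by
    intro a P
    by_cases hP : P.Countable
    · have hm := bad8_meagre F a (hWc a) (range ((↑) : ℚ → ℝ) ∪ P) ((countable_range _).union hP)
      by_contra! h
      refine not_isMeagre_of_isOpen (isOpen_univ (X := ℝ)) univ_nonempty (hm.mono ?_)
      intro t _
      exact (h t).2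
    · exact ⟨0, fun h => absurd h hP⟩
  choose pick hpick using hpick
  obtain ⟨x, hx⟩ := rec8 pick
  have hx : ∀ a, x a ∉ bad8 F a (range ((↑) : ℚ → ℝ) ∪ x '' Set.Iio a) := by
    intro a
    have := hpick a (x '' Set.Iio a) ((hWc a).image x)
    rwa [← hx a] at this
  have hxP : ∀ a, x a ∉ range ((↑) : ℚ → ℝ) ∪ x '' Set.Iio a := fun a h =>
    hx a (Or.inl (Or.inl h))
  have hinj : Function.Injective x := by
    intro a b hab
    rcases lt_trichotomy a b with h | h | h
    · exact absurd (Or.inr ⟨a, h, hab⟩) (hxP b)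
    · exact h
    · exact absurd (Or.inr ⟨b, h, hab.symm⟩) (hxP a)
  have hrange : ¬ (range x).Countable := by
    intro h
    rw [← image_univ] at h
    exact hWu (countable_of_injective_of_countable_image hinj.injOn h)
  have hEu : ¬ (range ((↑) : ℚ → ℝ) ∪ range x).Countable := fun h =>
    hrange (h.mono subset_union_right)
  have hconc : ∀ U : Set ℝ, IsOpen U → Set.range ((↑) : ℚ → ℝ) ⊆ U →
      ((range ((↑) : ℚ → ℝ) ∪ range x) \ U).Countable := by
    intro U hU hQ
    obtain ⟨b, hb⟩ := hF 0 (Prod.snd ⁻¹' Uᶜ)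
      (hU.isClosed_compl.preimage continuous_snd).isGδ
    have hIic : (Set.Iic b).Countable := by
      rw [← Set.Iio_insert]; exact (hWc b).insert b
    refine (hIic.image x).mono ?_
    rintro y ⟨hy, hyU⟩
    obtain ⟨c, rfl⟩ := hy.resolve_left fun h => hyU (hQ h)
    refine ⟨c, ?_, rfl⟩
    by_contra hcb
    rw [mem_Iic, not_le] at hcb
    apply hx c
    refine Or.inl (Or.inr ?_)
    simp only [mem_iUnion]
    refine ⟨0, ⟨b, hcb⟩, fun i => i.elim0, ?_, ?_⟩
    · simp only [hb]
      change IsMeagre Uᶜ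
      rw [IsMeagre, compl_compl]
      exact residual_of_dense_open hU (Rat.isDenseEmbedding_coe_real.dense.mono hQ)
    · simp only [hb]; exact hyU
  refine ⟨range ((↑) : ℚ → ℝ) ∪ range x, hEu, ?_, subset_union_left, ?_, hconc⟩
  · rintro n - A hAE hA ⟨f, hfi, hfc, hfm, hfz⟩
    obtain ⟨R, hR, hfn, hAR⟩ := extend8 A f hfc
    apply hA
    refine countable_of_injective_of_countable_image hfi ?_
    refine (main8 hWc F hF x hx n Finset.univ R hR hfn).mono ?_
    rintro _ ⟨z, hz, rfl⟩
    exact ⟨hfm hz, z, hAR z hz, fun i hi => absurd (Finset.mem_univ i) hi,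
      fun i _ => ⟨hAE z hz i, (hfz z hz i).symm⟩⟩
  · intro hG
    obtain ⟨O, hO, hQ⟩ := hG.eq_iInter_nat
    choose U hU hUO using fun m => isOpen_induced_iff.1 (hO m)
    apply hEu
    have hc : (range ((↑) : ℚ → ℝ) ∪
        ⋃ m, ((range ((↑) : ℚ → ℝ) ∪ range x) \ U m)).Countable := by
      refine (countable_range _).union (countable_iUnion fun m => hconc _ (hU m) ?_)
      intro q hq
      have h1 : (⟨q, Or.inl hq⟩ : ↥(range ((↑) : ℚ → ℝ) ∪ range x)) ∈ ⋂ m, O m := by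
        rw [← hQ]; exact hq
      have h2 := mem_iInter.1 h1 m
      rw [← hUO m] at h2
      exact h2
    refine hc.mono ?_
    intro e he
    by_cases h : ∀ m, e ∈ U m
    · left
      have h1 : (⟨e, he⟩ : ↥(range ((↑) : ℚ → ℝ) ∪ range x)) ∈ ⋂ m, O m := by
        refine mem_iInter.2 fun m => ?_
        rw [← hUO m]; exact h m
      rw [← hQ] at h1
      exact h1
    · push Not at h
      obtain ⟨m, hm⟩ := h
      exact Or.inr (mem_iUnion.2 ⟨m, he, hm⟩)
end

section
/- If E ⊆ ℝ is 2-entangled, then every strictly decreasing function f : A → E with A ⊆ E has countable domain A. -/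
theorem stmt9_aux (E : Set ℝ) (hE : NEntangled E 2) (A : Set ℝ) (hA : A ⊆ E)
    (f : ℝ → ℝ) (hf : StrictAntiOn f A) (hmap : Set.MapsTo f A E)
    (hd : ∀ a ∈ A, ∀ b ∈ A, a ≠ f b) : A.Countable := by
  by_contra hc
  have h1 : Cardinal.aleph 1 ≤ Cardinal.mk A := by
    rw [← Cardinal.le_aleph0_iff_set_countable, not_le] at hc
    rw [← Cardinal.succ_aleph0]
    exact Order.succ_le_of_lt hc
  obtain ⟨B, hBA, hB⟩ := Cardinal.le_mk_iff_exists_subset.1 h1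
  have hinj : Function.Injective (fun a : ℝ => (![a, f a] : Fin 2 → ℝ)) := by
    intro a b h
    simpa using congrFun h 0
  obtain ⟨x, hx, y, hy, hxy, h⟩ := hE ((fun a : ℝ => (![a, f a] : Fin 2 → ℝ)) '' B)
    (by
      rintro _ ⟨a, ha, rfl⟩ i
      fin_cases i
      · exact hA (hBA ha)
      · exact hmap (hBA ha))
    (by
      rintro _ ⟨a, ha, rfl⟩ i j hij
      have := hd a (hBA ha) a (hBA ha)
      fin_cases i <;> fin_cases j <;> simp_all)
    (by
      rintro _ ⟨a, ha, rfl⟩ _ ⟨b, hb, rfl⟩ hne i j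
      have hab : a ≠ b := fun h => hne (by rw [h])
      have h1 := hd a (hBA ha) b (hBA hb)
      have h2 := (hd b (hBA hb) a (hBA ha)).symm
      have h3 : f a ≠ f b := fun h => hab (hf.injOn (hBA ha) (hBA hb) h)
      fin_cases i <;> fin_cases j
      · exact hab
      · exact h1
      · exact h2
      · exact h3)
    (by rw [Cardinal.mk_image_eq hinj, hB])
    (fun _ => 0)
  obtain ⟨a, ha, rfl⟩ := hx
  obtain ⟨b, hb, rfl⟩ := hy
  have h0 : a < b := (h 0).2 rfl
  have h1 : f a < f b := (h 1).2 rfl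
  exact lt_asymm h1 (hf (hBA ha) (hBA hb) h0)

/-- If `E` is 2-entangled then every strictly decreasing function
from a subset `A ⊆ E` into `E` has countable domain. -/
theorem stmt9 (E : Set ℝ) (hE : NEntangled E 2) (A : Set ℝ) (hA : A ⊆ E)
    (f : ℝ → ℝ) (hf : StrictAntiOn f A) (hmap : Set.MapsTo f A E) :
    A.Countable := by
  have key : ∀ B ⊆ A, (∀ a ∈ B, ∀ b ∈ B, a ≠ f b) → B.Countable := fun B hB hd =>
    stmt9_aux E hE B (hB.trans hA) f (hf.mono hB) (hmap.mono_left hB) hd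
  have c1 : {a ∈ A | f a = a}.Countable := by
    apply Set.Subsingleton.countable
    rintro a ⟨ha, ha'⟩ b ⟨hb, hb'⟩
    rcases lt_trichotomy a b with h | h | h
    · have := hf ha hb h
      linarith
    · exact h
    · have := hf hb ha h
      linarith
  have c2 : (⋃ q : ℚ, {a ∈ A | a < q ∧ (q : ℝ) < f a}).Countable := by
    refine Set.countable_iUnion fun q => key _ (fun a h => h.1) ?_
    rintro a ⟨_, h1, _⟩ b ⟨_, _, h2⟩
    exact (h1.trans h2).ne
  have c3 : (⋃ q : ℚ, {a ∈ A | f a < q ∧ (q : ℝ) < a}).Countable := by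
    refine Set.countable_iUnion fun q => key _ (fun a h => h.1) ?_
    rintro a ⟨_, _, h1⟩ b ⟨_, h2, _⟩
    exact (h2.trans h1).ne'
  refine ((c1.union c2).union c3).mono fun a ha => ?_
  rcases lt_trichotomy (f a) a with h | h | h
  · obtain ⟨q, h1, h2⟩ := exists_rat_btwn h
    exact Or.inr (Set.mem_iUnion.2 ⟨q, ha, h1, h2⟩)
  · exact Or.inl (Or.inl ⟨ha, h⟩)
  · obtain ⟨q, h1, h2⟩ := exists_rat_btwn h
    exact Or.inl (Or.inr (Set.mem_iUnion.2 ⟨q, ha, h1, h2⟩))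
end

section
/- Let E ⊆ ℝ be such that every strictly decreasing function f : A → E with A ⊆ E has countable domain A (i.e., E admits no uncountable strictly decreasing functions from a subset of E into E). Then (E[≤])² is a normal topological space. -/
open Set Filter Topology

lemma aux_choice {ι α : Type*} [Countable ι] (P : ι → α → Prop) :
    ∃ C : Set α, C.Countable ∧ (∀ p ∈ C, ∃ i, P i p) ∧ ∀ i p, P i p → ∃ p' ∈ C, P i p' := by
  classical
  let J := {i : ι // ∃ p, P i p}
  refine ⟨range (fun j : J => j.2.choose), countable_range _, ?_, ?_⟩
  · rintro _ ⟨j, rfl⟩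
    exact ⟨j.1, j.2.choose_spec⟩
  · intro i p h
    let j : J := ⟨i, p, h⟩
    exact ⟨_, ⟨j, rfl⟩, j.2.choose_spec⟩

lemma aux_order (E : Set ℝ)
    (hE : ∀ A : Set ℝ, A ⊆ E → ∀ f : ℝ → ℝ,
      StrictAntiOn f A → Set.MapsTo f A E → A.Countable) (S : Set (E × E)) :
    ∃ C ⊆ S, C.Countable ∧
      ∀ q ∈ S, ∃ p ∈ C, (p.1 : ℝ) ≤ q.1 ∧ (p.2 : ℝ) ≤ q.2 := by
  classical
  obtain ⟨C1, c1, m1, h1⟩ := aux_choice (fun (i : ℚ × ℚ) (p : E × E) =>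
    p ∈ S ∧ (p.1 : ℝ) < i.1 ∧ (p.2 : ℝ) < i.2)
  let T : Set (E × E) := {q | q ∈ S ∧ ∀ p ∈ S, ¬ ((p.1 : ℝ) < q.1 ∧ (p.2 : ℝ) < q.2)}
  obtain ⟨C2, c2, m2, h2⟩ := aux_choice (fun (r : ℚ) (p : E × E) =>
    p ∈ T ∧ (p.2 : ℝ) < r ∧ ∃ q ∈ T, (q.1 : ℝ) = p.1 ∧ (r : ℝ) < q.2)
  obtain ⟨C3, c3, m3, h3⟩ := aux_choice (fun (r : ℚ) (p : E × E) =>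
    p ∈ T ∧ (p.1 : ℝ) < r ∧ ∃ q ∈ T, (q.2 : ℝ) = p.2 ∧ (r : ℝ) < q.1)
  let R : Set (E × E) := {q | q ∈ T ∧ (∀ p ∈ T, (p.1 : ℝ) = q.1 → ¬ (p.2 : ℝ) < q.2) ∧
    (∀ p ∈ T, (p.2 : ℝ) = q.2 → ¬ (p.1 : ℝ) < q.1)}
  have hR1 : ∀ p ∈ R, ∀ q ∈ R, (p.1 : ℝ) = q.1 → p = q := by
    intro p hp q hq h
    have a := hq.2.1 p hp.1 h
    have b := hp.2.1 q hq.1 h.symm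
    exact Prod.ext (Subtype.ext h) (Subtype.ext (le_antisymm (not_lt.1 b) (not_lt.1 a)))
  have hRa : ∀ p ∈ R, ∀ q ∈ R, (p.1 : ℝ) < q.1 → (q.2 : ℝ) < p.2 := by
    intro p hp q hq h
    rcases lt_trichotomy (p.2 : ℝ) q.2 with g | g | g
    · exact absurd ⟨h, g⟩ (hq.1.2 p hp.1.1)
    · exact absurd h (hq.2.2 p hp.1 g)
    · exact g
  have cR : R.Countable := by
    let A : Set ℝ := (fun p : E × E => (p.1 : ℝ)) '' R
    let f : ℝ → ℝ := fun x => if h : ∃ p ∈ R, (p.1 : ℝ) = x then (h.choose.2 : ℝ) else 0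
    have hf : ∀ p ∈ R, f p.1 = p.2 := by
      intro p hp
      have h : ∃ p' ∈ R, (p'.1 : ℝ) = p.1 := ⟨p, hp, rfl⟩
      have e := hR1 _ h.choose_spec.1 p hp h.choose_spec.2
      simp only [f]
      rw [dif_pos h, e]
    have cA : A.Countable := by
      refine hE A ?_ f ?_ ?_
      · rintro _ ⟨p, hp, rfl⟩
        exact p.1.2
      · rintro _ ⟨p, hp, rfl⟩ _ ⟨q, hq, rfl⟩ h
        simp only [hf p hp, hf q hq]
        exact hRa p hp q hq h
      · rintro _ ⟨p, hp, rfl⟩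
        simp only [hf p hp]
        exact p.2.2
    exact countable_of_injective_of_countable_image (fun p hp q hq h => hR1 p hp q hq h) cA
  refine ⟨C1 ∪ C2 ∪ C3 ∪ R, ?_, ((c1.union c2).union c3).union cR, ?_⟩
  · rintro p (((h | h) | h) | h)
    · obtain ⟨i, hi⟩ := m1 p h
      exact hi.1
    · obtain ⟨i, hi⟩ := m2 p h
      exact hi.1.1
    · obtain ⟨i, hi⟩ := m3 p h
      exact hi.1.1
    · exact h.1.1
  · intro q hq
    by_cases hT : q ∈ T
    · by_cases hqR : q ∈ R
      · exact ⟨q, Or.inr hqR, le_rfl, le_rfl⟩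
      · by_cases hv : ∃ p ∈ T, (p.1 : ℝ) = q.1 ∧ (p.2 : ℝ) < q.2
        · obtain ⟨p, hp, e, l⟩ := hv
          obtain ⟨r, r1, r2⟩ := exists_rat_btwn l
          obtain ⟨p', hp', hT', hr', q', hq', e', l'⟩ := h2 r p ⟨hp, r1, q, hT, e.symm, r2⟩
          refine ⟨p', Or.inl (Or.inl (Or.inr hp')), ?_, by linarith⟩
          by_contra hlt
          exact hq'.2 p hp.1 ⟨by linarith, by linarith⟩
        · by_cases hh : ∃ p ∈ T, (p.2 : ℝ) = q.2 ∧ (p.1 : ℝ) < q.1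
          · obtain ⟨p, hp, e, l⟩ := hh
            obtain ⟨r, r1, r2⟩ := exists_rat_btwn l
            obtain ⟨p', hp', hT', hr', q', hq', e', l'⟩ := h3 r p ⟨hp, r1, q, hT, e.symm, r2⟩
            refine ⟨p', Or.inl (Or.inr hp'), by linarith, ?_⟩
            by_contra hlt
            exact hq'.2 p hp.1 ⟨by linarith, by linarith⟩
          · exact absurd ⟨hT, fun p hp e l => hv ⟨p, hp, e, l⟩,
              fun p hp e l => hh ⟨p, hp, e, l⟩⟩ hqR
    · have : ∃ p ∈ S, (p.1 : ℝ) < q.1 ∧ (p.2 : ℝ) < q.2 := by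
        by_contra hcon
        exact hT ⟨hq, fun p hp h => hcon ⟨p, hp, h⟩⟩
      obtain ⟨p, hp, l1, l2⟩ := this
      obtain ⟨r, r1, r2⟩ := exists_rat_btwn l1
      obtain ⟨s, s1, s2⟩ := exists_rat_btwn l2
      obtain ⟨p', hp', -, a, b⟩ := h1 (r, s) p ⟨hp, r1, s1⟩
      exact ⟨p', Or.inl (Or.inl (Or.inl hp')), (a.trans r2).le, (b.trans s2).le⟩

lemma aux_regular {X : Type*} [TopologicalSpace X] (f : X → ℝ)
    (hb : ∀ x : X, (𝓝 x).HasBasis (fun ε : ℝ => 0 < ε) (fun ε => f ⁻¹' Ico (f x) (f x + ε))) :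
    RegularSpace X := by
  refine RegularSpace.of_hasBasis hb ?_
  intro x ε hε
  rw [← isOpen_compl_iff, isOpen_iff_mem_nhds]
  intro z hz
  rw [(hb z).mem_iff]
  by_cases h : f z < f x
  · refine ⟨f x - f z, by linarith, fun w hw hw' => ?_⟩
    have := hw.2
    have := hw'.1
    linarith
  · refine ⟨1, one_pos, fun w hw hw' => ?_⟩
    have h1 := hw.1
    have h2 := hw'.2
    exact hz ⟨not_lt.1 h, by linarith⟩

lemma aux_lindelof {X : Type*} [TopologicalSpace X] (f : X → ℝ)
    (hb : ∀ x : X, (𝓝 x).HasBasis (fun ε : ℝ => 0 < ε) (fun ε => f ⁻¹' Ico (f x) (f x + ε)))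
    (H : ∀ S : Set (X × X), ∃ C ⊆ S, C.Countable ∧
      ∀ q ∈ S, ∃ p ∈ C, f p.1 ≤ f q.1 ∧ f p.2 ≤ f q.2) :
    LindelofSpace (X × X) := by
  refine ⟨isLindelof_of_countable_subcover ?_⟩
  intro ι U hU hcov
  have key : ∀ p : X × X, ∃ (i : ι) (n : ℕ), ∀ q : X × X,
      f p.1 ≤ f q.1 → f p.2 ≤ f q.2 → f q.1 < f p.1 + 1 / (n + 1 : ℝ) →
      f q.2 < f p.2 + 1 / (n + 1 : ℝ) → q ∈ U i := by
    intro p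
    obtain ⟨i, hi⟩ := mem_iUnion.1 (hcov (mem_univ p))
    have hn : U i ∈ 𝓝 p := (hU i).mem_nhds hi
    rw [nhds_prod_eq, Filter.mem_prod_iff] at hn
    obtain ⟨s, hs, t, ht, hst⟩ := hn
    obtain ⟨ε, hε, hεs⟩ := (hb p.1).mem_iff.1 hs
    obtain ⟨δ, hδ, hδt⟩ := (hb p.2).mem_iff.1 ht
    obtain ⟨n, hn⟩ := exists_nat_one_div_lt (lt_min hε hδ)
    have n1 := hn.trans_le (min_le_left _ _)
    have n2 := hn.trans_le (min_le_right _ _)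
    refine ⟨i, n, fun q a b c d => hst ⟨hεs ⟨a, ?_⟩, hδt ⟨b, ?_⟩⟩⟩
    · linarith
    · linarith
  choose i n hin using key
  let S : ℕ × ℤ × ℤ → Set (X × X) := fun c =>
    {p | n p = c.1 ∧ ⌊f p.1 * (n p + 1)⌋ = c.2.1 ∧ ⌊f p.2 * (n p + 1)⌋ = c.2.2}
  choose C hCS hC hCc using fun c => H (S c)
  refine ⟨i '' ⋃ c, C c, (countable_iUnion hC).image i, ?_⟩
  intro q _
  obtain ⟨p, hp, a, b⟩ := hCc (n q, ⌊f q.1 * (n q + 1)⌋, ⌊f q.2 * (n q + 1)⌋) q ⟨rfl, rfl, rfl⟩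
  obtain ⟨e1, e2, e3⟩ := hCS _ hp
  simp only at e1 e2 e3
  have hcl : ∀ x y : ℝ, ⌊x * (n q + 1)⌋ = ⌊y * (n q + 1)⌋ → y < x + 1 / (n q + 1 : ℝ) := by
    intro x y h
    have hpos : (0 : ℝ) < n q + 1 := by positivity
    have h1 := Int.abs_sub_lt_one_of_floor_eq_floor h
    have h2 := (abs_lt.1 h1).1
    rw [← sub_lt_iff_lt_add', lt_div_iff₀ hpos]
    linarith
  rw [e1] at e2 e3
  refine mem_biUnion (mem_image_of_mem i (mem_iUnion.2 ⟨_, hp⟩)) (hin p q a b ?_ ?_)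
  · rw [e1]; exact hcl _ _ e2
  · rw [e1]; exact hcl _ _ e3

lemma aux_basis (x : ℝ) :
    (@nhds ℝ sorgenfrey x).HasBasis (fun ε : ℝ => 0 < ε) (fun ε => Ico x (x + ε)) := by
  let _ := sorgenfrey
  constructor
  intro t
  constructor
  · intro ht
    obtain ⟨u, hut, hu, hx⟩ := (@mem_nhds_iff ℝ sorgenfrey x t).1 ht
    have : ∃ ε : ℝ, 0 < ε ∧ Ico x (x + ε) ⊆ u := by
      clear hut ht
      change TopologicalSpace.GenerateOpen _ u at hu
      induction hu with
      | basic s hs =>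
        obtain ⟨a, b, hab, rfl⟩ := hs
        exact ⟨b - x, by linarith [hx.2], fun y hy => ⟨hx.1.trans hy.1, by linarith [hy.2]⟩⟩
      | univ => exact ⟨1, one_pos, subset_univ _⟩
      | inter s t _ _ ih1 ih2 =>
        obtain ⟨e, he, h1⟩ := ih1 hx.1
        obtain ⟨d, hd, h2⟩ := ih2 hx.2
        refine ⟨min e d, lt_min he hd, fun y hy => ⟨h1 ⟨hy.1, ?_⟩, h2 ⟨hy.1, ?_⟩⟩⟩
        · linarith [hy.2, min_le_left e d]
        · linarith [hy.2, min_le_right e d]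
      | sUnion K _ ih =>
        obtain ⟨s, hs, hxs⟩ := hx
        obtain ⟨e, he, h⟩ := ih s hs hxs
        exact ⟨e, he, h.trans (subset_sUnion_of_mem hs)⟩
    obtain ⟨ε, h, h'⟩ := this
    exact ⟨ε, h, h'.trans hut⟩
  · rintro ⟨ε, hε, h⟩
    refine (@mem_nhds_iff ℝ sorgenfrey x t).2 ⟨_, h, ?_, ⟨le_rfl, by linarith⟩⟩
    exact TopologicalSpace.isOpen_generateFrom_of_mem ⟨x, x + ε, by linarith, rfl⟩

lemma aux_normal {X : Type*} [TopologicalSpace X] (f : X → ℝ)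
    (hb : ∀ x : X, (𝓝 x).HasBasis (fun ε : ℝ => 0 < ε) (fun ε => f ⁻¹' Ico (f x) (f x + ε)))
    (H : ∀ S : Set (X × X), ∃ C ⊆ S, C.Countable ∧
      ∀ q ∈ S, ∃ p ∈ C, f p.1 ≤ f q.1 ∧ f p.2 ≤ f q.2) :
    NormalSpace (X × X) := by
  have := aux_regular f hb
  have := aux_lindelof f hb H
  infer_instance

/-- If every strictly decreasing function from a subset of `E`
into `E` has countable domain, then `(E[≤])²` is normal. -/
theorem stmt10 (E : Set ℝ)
    (hE : ∀ A : Set ℝ, A ⊆ E → ∀ f : ℝ → ℝ,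
      StrictAntiOn f A → Set.MapsTo f A E → A.Countable) :
    @NormalSpace (E × E) (sorgenfreySq E) := by
  refine @aux_normal E (sorgenfreySub E) Subtype.val ?_ (aux_order E hE)
  intro x
  have := @nhds_induced ℝ E sorgenfrey Subtype.val x
  unfold sorgenfreySub
  rw [this]
  exact (aux_basis x).comap _
end

section
/- Assume the Continuum Hypothesis. Then there exists an uncountable set E ⊆ ℝ such that: (1) E is not 2-entangled; (2) ℚ ⊆ E and E is concentrated on ℚ; and (3) (E[≤])² is a normal topological space. -/
open Set Filter Topology

def NC (C : Set (ℝ × ℝ)) : Prop := ∀ p ∈ C, ∀ q ∈ C, ¬ (p.1 < q.1 ∧ p.2 < q.2)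

lemma NC.closure {A : Set (ℝ × ℝ)} (h : NC A) : NC (closure A) := by
  rintro p hp q hq ⟨h1, h2⟩
  obtain ⟨a, ha1, ha2⟩ := exists_between h1
  obtain ⟨b, hb1, hb2⟩ := exists_between h2
  obtain ⟨p', hp', hpA⟩ := mem_closure_iff.1 hp (Iio a ×ˢ Iio b) (isOpen_Iio.prod isOpen_Iio) ⟨ha1, hb1⟩
  obtain ⟨q', hq', hqA⟩ := mem_closure_iff.1 hq (Ioi a ×ˢ Ioi b) (isOpen_Ioi.prod isOpen_Ioi) ⟨ha2, hb2⟩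
  exact h p' hpA q' hqA ⟨lt_trans hp'.1 hq'.1, lt_trans hp'.2 hq'.2⟩

lemma NC.bad1 {C : Set (ℝ × ℝ)} (h : NC C) : {y | ∃ x x', x < x' ∧ (x, y) ∈ C ∧ (x', y) ∈ C}.Countable := by
  have : ∀ y : {y | ∃ x x', x < x' ∧ (x, y) ∈ C ∧ (x', y) ∈ C}, ∃ r : ℚ, ∃ x x' : ℝ, x < r ∧ (r : ℝ) < x' ∧ (x, y.1) ∈ C ∧ (x', y.1) ∈ C := by
    rintro ⟨y, x, x', hx, h1, h2⟩
    obtain ⟨r, hr⟩ := exists_rat_btwn hx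
    exact ⟨r, x, x', hr.1, hr.2, h1, h2⟩
  choose r hr using this
  have inj : Function.Injective r := by
    have key : ∀ y y', r y = r y' → ¬ (y.1 < y'.1) := by
      intro y y' e hlt
      obtain ⟨x, _, h1, _, h2, _⟩ := hr y
      obtain ⟨_, x', _, h3, _, h4⟩ := hr y'
      rw [e] at h1
      exact h _ h2 _ h4 ⟨h1.trans h3, hlt⟩
    intro y y' e
    exact Subtype.ext (le_antisymm (not_lt.1 (key _ _ e.symm)) (not_lt.1 (key _ _ e)))
  exact Set.countable_coe_iff.1 inj.countable

lemma NC.swap {C : Set (ℝ × ℝ)} (h : NC C) : NC (Prod.swap ⁻¹' C) :=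
  fun p hp q hq hh => h _ hp _ hq ⟨hh.2, hh.1⟩

lemma ev_sub {P : ℝ → Prop} (h : ∀ x y, P x → P y → x = y) : ∀ᶠ x in residual ℝ, ¬ P x := by
  by_cases hP : ∃ a, P a
  · obtain ⟨a, ha⟩ := hP
    have : ({a}ᶜ : Set ℝ) ∈ residual ℝ :=
      residual_of_dense_open isOpen_compl_singleton (dense_compl_singleton a)
    filter_upwards [this] with x hx hp
    exact hx (h x a hp ha)
  · push Not at hP
    exact Eventually.of_forall hP

abbrev Tk := (ℚ → ℝ) × (ℕ → ℝ × ℝ)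

def Uo (e : ℚ → ℝ) : Set ℝ := {x | ∃ q : ℚ, |x - q| < Real.exp (e q)}

lemma Uo_open (e : ℚ → ℝ) : IsOpen (Uo e) := by
  have : Uo e = ⋃ q : ℚ, {x : ℝ | |x - q| < Real.exp (e q)} := by ext; simp [Uo]
  rw [this]
  exact isOpen_iUnion fun q => isOpen_lt (by fun_prop) (by fun_prop)

lemma Uo_rat (e : ℚ → ℝ) (q : ℚ) : (q : ℝ) ∈ Uo e := ⟨q, by simpa using Real.exp_pos _⟩

lemma Uo_ev (e : ℚ → ℝ) (i : ℕ) : ∀ᶠ x : ℝ in residual ℝ, x + (i : ℝ) ∈ Uo e := by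
  refine residual_of_dense_open (s := {x : ℝ | x + i ∈ Uo e}) ((Uo_open e).preimage (by fun_prop)) ?_
  refine Rat.isDenseEmbedding_coe_real.dense.mono ?_
  rintro _ ⟨q, rfl⟩
  have := Uo_rat e (q + i)
  push_cast at this
  exact this

def Cl (t : Tk) : Set (ℝ × ℝ) := closure (range t.2)

def good (t : Tk) (z x : ℝ) : Prop :=
  ∀ i j : ℕ, x + i ≠ z + j ∧ x + i ∈ Uo t.1 ∧
    (NC (Cl t) → (x + i, x + j) ∉ Cl t ∧
      ((x + i, z + j) ∈ Cl t → ∃ a b, a < b ∧ (a, z + j) ∈ Cl t ∧ (b, z + j) ∈ Cl t) ∧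
      ((z + j, x + i) ∈ Cl t → ∃ a b, a < b ∧ (z + j, a) ∈ Cl t ∧ (z + j, b) ∈ Cl t))

lemma good_ev (t : Tk) (z : ℝ) : ∀ᶠ x in residual ℝ, good t z x := by
  unfold good
  refine eventually_countable_forall.2 fun i => eventually_countable_forall.2 fun j => ?_
  refine Eventually.and ?_ (Eventually.and (Uo_ev _ _) ?_)
  · exact ev_sub (P := fun x => x + i = z + j) (by intros; linarith)
  by_cases hC : NC (Cl t)
  swap
  · exact Eventually.of_forall fun x h => absurd h hC
  have e1 := ev_sub (P := fun x : ℝ => (x + i, x + j) ∈ Cl t) (by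
    intro x y hx hy
    rcases lt_trichotomy x y with h | h | h
    · exact absurd ⟨by simpa using h, by simpa using h⟩ (hC _ hx _ hy)
    · exact h
    · exact absurd ⟨by simpa using h, by simpa using h⟩ (hC _ hy _ hx))
  have e2 := ev_sub (P := fun x : ℝ => (x + i, z + j) ∈ Cl t ∧ ¬ ∃ a b, a < b ∧ (a, z + j) ∈ Cl t ∧ (b, z + j) ∈ Cl t) (by
    intro x y hx hy
    rcases lt_trichotomy x y with h | h | h
    · exact absurd ⟨_, _, by simpa using h, hx.1, hy.1⟩ hx.2
    · exact h
    · exact absurd ⟨_, _, by simpa using h, hy.1, hx.1⟩ hx.2)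
  have e3 := ev_sub (P := fun x : ℝ => (z + j, x + i) ∈ Cl t ∧ ¬ ∃ a b, a < b ∧ (z + j, a) ∈ Cl t ∧ (z + j, b) ∈ Cl t) (by
    intro x y hx hy
    rcases lt_trichotomy x y with h | h | h
    · exact absurd ⟨_, _, by simpa using h, hx.1, hy.1⟩ hx.2
    · exact h
    · exact absurd ⟨_, _, by simpa using h, hy.1, hx.1⟩ hx.2)
  filter_upwards [e1, e2, e3] with x h1 h2 h3 _
  refine ⟨h1, fun h => ?_, fun h => ?_⟩
  · by_contra hh; exact h2 ⟨h, hh⟩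
  · by_contra hh; exact h3 ⟨h, hh⟩

lemma exists_seq {ι : Type} [LinearOrder ι] [WellFoundedLT ι] (hc : ∀ a : ι, (Iio a).Countable)
    (e : ι → Tk) : ∃ x : ι → ℝ, ∀ a, ∀ b < a, ∀ c < a, good (e b) (x c) (x a) := by
  have H : ∀ (a : ι) (f : ∀ c, c < a → ℝ), ∃ y : ℝ, ∀ b < a, ∀ (c) (h : c < a), good (e b) (f c h) y := by
    intro a f
    have : Countable (Iio a) := (hc a).to_subtype
    have h : ∀ᶠ y in residual ℝ, ∀ b : Iio a, ∀ c : Iio a, good (e b) (f c.1 c.2) y :=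
      eventually_countable_forall.2 fun b => eventually_countable_forall.2 fun c => good_ev _ _
    obtain ⟨y, hy⟩ := (dense_of_mem_residual h).nonempty
    exact ⟨y, fun b hb c hc => hy ⟨b, hb⟩ ⟨c, hc⟩⟩
  choose F hF using H
  have wf : WellFounded (fun a b : ι => a < b) := wellFounded_lt
  refine ⟨wf.fix F, fun a b hb c hc => ?_⟩
  rw [wf.fix_eq F a]
  exact hF a (fun y _ => wf.fix F y) b hb c hc

def EE {ι : Type} (x : ι → ℝ) : Set ℝ := range ((↑) : ℚ → ℝ) ∪ {y | ∃ (a : ι) (n : ℕ), y = x a + n}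

lemma cnt {ι : Type} [LinearOrder ι] (hc : ∀ a : ι, (Iio a).Countable) (x : ι → ℝ) (b : ι) :
    {y | ∃ (a : ι) (n : ℕ), a ≤ b ∧ y = x a + n}.Countable := by
  have h1 : (Iic b).Countable := by
    have := (hc b).insert b
    rwa [Iio_insert] at this
  refine ((h1.prod (countable_univ (α := ℕ))).image (fun p => x p.1 + p.2)).mono ?_
  rintro y ⟨a, n, h, rfl⟩
  exact ⟨(a, n), ⟨h, trivial⟩, rfl⟩

lemma key {ι : Type} [LinearOrder ι] (hc : ∀ a : ι, (Iio a).Countable)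
    (e : ι → Tk) (he : Function.Surjective e) (x : ι → ℝ)
    (hx : ∀ a, ∀ b < a, ∀ c < a, good (e b) (x c) (x a)) (A : Set (ℝ × ℝ)) (hA : NC A) :
    ∃ Z : Set ℝ, Z.Countable ∧ ∀ p ∈ A, p.1 ∈ EE x → p.2 ∈ EE x → p.1 ∈ Z ∨ p.2 ∈ Z := by
  rcases A.eq_empty_or_nonempty with rfl | hne
  · exact ⟨∅, countable_empty, by simp⟩
  obtain ⟨c, hcA, hcc, hAc⟩ := (TopologicalSpace.IsSeparable.of_separableSpace A).exists_countable_dense_subset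
  have cne : c.Nonempty := by
    rw [← closure_nonempty_iff]; exact hne.mono hAc
  obtain ⟨D, rfl⟩ := hcc.exists_eq_range cne
  obtain ⟨b, hb⟩ := he ((fun _ => 0), D)
  have hCl : Cl (e b) = closure (range D) := by rw [hb]; rfl
  have hNC : NC (Cl (e b)) := by
    rw [hCl]; exact NC.closure fun p hp q hq => hA p (hcA hp) q (hcA hq)
  refine ⟨({y | ∃ x x', x < x' ∧ (x, y) ∈ Cl (e b) ∧ (x', y) ∈ Cl (e b)} ∪
    {y | ∃ x x', x < x' ∧ (x, y) ∈ Prod.swap ⁻¹' Cl (e b) ∧ (x', y) ∈ Prod.swap ⁻¹' Cl (e b)}) ∪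
    (range ((↑) : ℚ → ℝ) ∪ {y | ∃ (a : ι) (n : ℕ), a ≤ b ∧ y = x a + n}),
    (hNC.bad1.union hNC.swap.bad1).union ((countable_range _).union (cnt hc x b)), ?_⟩
  rintro ⟨p, q⟩ hpA hp hq
  by_contra hcon
  push Not at hcon
  obtain ⟨h1, h2⟩ := hcon
  simp only [mem_union, not_or] at h1 h2 hp hq
  have hpC : (p, q) ∈ Cl (e b) := by rw [hCl]; exact hAc hpA
  obtain ⟨a, n, rfl⟩ := hp.resolve_left h1.2.1
  obtain ⟨a', n', rfl⟩ := hq.resolve_left h2.2.1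
  have hba : b < a := by
    by_contra hh; exact h1.2.2 ⟨a, n, not_lt.1 hh, rfl⟩
  have hba' : b < a' := by
    by_contra hh; exact h2.2.2 ⟨a', n', not_lt.1 hh, rfl⟩
  rcases lt_trichotomy a a' with h | h | h
  · exact h1.1.2 (((hx a' b hba' a h n' n).2.2 hNC).2.2 hpC)
  · subst h
    exact ((hx a b hba b hba n n').2.2 hNC).1 hpC
  · exact h2.1.1 (((hx a b hba a' h n n').2.2 hNC).2.1 hpC)

/-- one-dimensional covering -/
lemma cover1 (L : Set ℝ) (r : ℝ → ℝ) (hr : ∀ y ∈ L, 0 < r y) :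
    ∃ K ⊆ L, K.Countable ∧ ∀ y ∈ L, ∃ k ∈ K, k ≤ y ∧ y < k + r k := by
  obtain ⟨T, hTL, hT, hU⟩ := TopologicalSpace.isOpen_biUnion_countable L (fun y => Ioo y (y + r y))
    (fun _ _ => isOpen_Ioo)
  have hR : (L \ ⋃ y ∈ L, Ioo y (y + r y)).Countable := by
    refine Set.PairwiseDisjoint.countable_of_Ioo (y := fun y => y + r y) ?_ ?_
    · have : ∀ y ∈ (L \ ⋃ y ∈ L, Ioo y (y + r y)), ∀ z ∈ (L \ ⋃ y ∈ L, Ioo y (y + r y)), y < z →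
          Disjoint (Ioo y (y + r y)) (Ioo z (z + r z)) := by
        intro y hy z hz hyz
        rw [Set.disjoint_left]
        intro w hw hw'
        apply hz.2
        simp only [mem_iUnion]
        exact ⟨y, hy.1, hyz, hw'.1.trans hw.2⟩
      intro y hy z hz hne
      rcases lt_or_gt_of_ne hne with h | h
      · exact this y hy z hz h
      · exact (this z hz y hy h).symm
    · intro y hy; linarith [hr y hy.1]
  refine ⟨T ∪ (L \ ⋃ y ∈ L, Ioo y (y + r y)), union_subset hTL sdiff_subset, hT.union hR, ?_⟩
  intro y hy
  by_cases h : y ∈ ⋃ y ∈ L, Ioo y (y + r y)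
  · rw [← hU] at h
    simp only [mem_iUnion] at h
    obtain ⟨k, hk, h⟩ := h
    exact ⟨k, Or.inl hk, h.1.le, h.2⟩
  · exact ⟨y, Or.inr ⟨hy, h⟩, le_rfl, by linarith [hr y hy]⟩

lemma floor_close {a b : ℝ} {n : ℕ} (h : ⌊a * (n + 1)⌋ = ⌊b * (n + 1)⌋) : b < a + 1 / (n + 1) := by
  have h1 := Int.floor_le (a * (n + 1))
  have h2 := Int.lt_floor_add_one (b * (n + 1))
  rw [← h] at h2
  have hn : (0 : ℝ) < n + 1 := by positivity
  have : (b - a) * (n + 1) < 1 := by linarith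
  have := (lt_div_iff₀ hn).2 this
  linarith

lemma cover2 (E : Set ℝ)
    (hE : ∀ A : Set (ℝ × ℝ), NC A → ∃ Z : Set ℝ, Z.Countable ∧ ∀ p ∈ A, p.1 ∈ E → p.2 ∈ E → p.1 ∈ Z ∨ p.2 ∈ Z)
    (r : ℝ × ℝ → ℝ) (hr : ∀ p ∈ E ×ˢ E, 0 < r p) :
    ∃ K ⊆ E ×ˢ E, K.Countable ∧ ∀ p ∈ E ×ˢ E, ∃ k ∈ K, k.1 ≤ p.1 ∧ p.1 < k.1 + r k ∧ k.2 ≤ p.2 ∧ p.2 < k.2 + r k := by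
  obtain ⟨T, hTL, hT, hU⟩ := TopologicalSpace.isOpen_biUnion_countable (E ×ˢ E)
    (fun p : ℝ × ℝ => Ioo p.1 (p.1 + r p) ×ˢ Ioo p.2 (p.2 + r p))
    (fun _ _ => isOpen_Ioo.prod isOpen_Ioo)
  set V : Set (ℝ × ℝ) := ⋃ p ∈ E ×ˢ E, Ioo p.1 (p.1 + r p) ×ˢ Ioo p.2 (p.2 + r p) with hV
  let A : ℕ × ℤ × ℤ → Set (ℝ × ℝ) := fun m =>
    {p | p ∈ E ×ˢ E ∧ p ∉ V ∧ 1 / ((m.1 : ℝ) + 1) < r p ∧ ⌊p.1 * (m.1 + 1)⌋ = m.2.1 ∧ ⌊p.2 * (m.1 + 1)⌋ = m.2.2}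
  have hA : ∀ m, NC (A m) := by
    rintro m p ⟨hp, -, hpr, hp1, hp2⟩ q ⟨hq, hqV, -, hq1, hq2⟩ ⟨h1, h2⟩
    apply hqV
    rw [hV]
    simp only [mem_iUnion]
    have c1 := floor_close (hp1.trans hq1.symm)
    have c2 := floor_close (hp2.trans hq2.symm)
    exact ⟨p, hp, ⟨h1, by linarith⟩, ⟨h2, by linarith⟩⟩
  choose Z hZc hZ using fun m => hE (A m) (hA m)
  let W : Set ℝ := (⋃ m, Z m) ∩ E
  have hW : W.Countable := (countable_iUnion hZc).mono inter_subset_left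
  have hcov : ∀ p ∈ E ×ˢ E, p ∉ V → p.1 ∈ W ∨ p.2 ∈ W := by
    intro p hp hpV
    obtain ⟨n, hn⟩ := exists_nat_one_div_lt (hr p hp)
    rcases hZ (n, ⌊p.1 * (n + 1)⌋, ⌊p.2 * (n + 1)⌋) p ⟨hp, hpV, hn, rfl, rfl⟩ hp.1 hp.2 with h | h
    · exact Or.inl ⟨mem_iUnion.2 ⟨_, h⟩, hp.1⟩
    · exact Or.inr ⟨mem_iUnion.2 ⟨_, h⟩, hp.2⟩
  have v : ∀ z : W, _ := fun z => cover1 E (fun y => r (z, y)) (fun y hy => hr _ ⟨z.2.2, hy⟩)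
  have h : ∀ z : W, _ := fun z => cover1 E (fun y => r (y, z)) (fun y hy => hr _ ⟨hy, z.2.2⟩)
  choose Kv hKv1 hKv2 hKv using v
  choose Kh hKh1 hKh2 hKh using h
  have := hW.to_subtype
  refine ⟨T ∪ ((⋃ z : W, (fun y => ((z : ℝ), y)) '' Kv z) ∪ ⋃ z : W, (fun y => (y, (z : ℝ))) '' Kh z), ?_, ?_, ?_⟩
  · refine union_subset hTL (union_subset (iUnion_subset fun z => ?_) (iUnion_subset fun z => ?_))
    · rintro _ ⟨y, hy, rfl⟩; exact ⟨z.2.2, hKv1 z hy⟩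
    · rintro _ ⟨y, hy, rfl⟩; exact ⟨hKh1 z hy, z.2.2⟩
  · exact hT.union ((countable_iUnion fun z => (hKv2 z).image _).union (countable_iUnion fun z => (hKh2 z).image _))
  · intro p hp
    by_cases hpV : p ∈ V
    · rw [← hU] at hpV
      simp only [mem_iUnion] at hpV
      obtain ⟨k, hk, h⟩ := hpV
      exact ⟨k, Or.inl hk, h.1.1.le, h.1.2, h.2.1.le, h.2.2⟩
    · rcases hcov p hp hpV with h | h
      · obtain ⟨k, hk, h1, h2⟩ := hKv ⟨p.1, h⟩ p.2 hp.2
        exact ⟨(p.1, k), Or.inr (Or.inl (mem_iUnion.2 ⟨⟨p.1, h⟩, k, hk, rfl⟩)), le_rfl,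
          by have := hr (p.1, k) ⟨hp.1, hKv1 _ hk⟩; simpa using this, h1, h2⟩
      · obtain ⟨k, hk, h1, h2⟩ := hKh ⟨p.2, h⟩ p.1 hp.1
        exact ⟨(k, p.2), Or.inr (Or.inr (mem_iUnion.2 ⟨⟨p.2, h⟩, k, hk, rfl⟩)), h1, h2, le_rfl,
          by have := hr (k, p.2) ⟨hKh1 _ hk, hp.2⟩; simpa using this⟩

lemma sorg_open_iff (U : Set ℝ) : IsOpen[sorgenfrey] U ↔ ∀ x ∈ U, ∃ ε > 0, Ico x (x + ε) ⊆ U := by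
  constructor
  · intro h
    induction h with
    | basic s hs =>
      obtain ⟨a, b, hab, rfl⟩ := hs
      intro x hx
      exact ⟨b - x, sub_pos.2 hx.2, fun y hy => ⟨hx.1.trans hy.1, by linarith [hy.2]⟩⟩
    | univ => intro x _; exact ⟨1, one_pos, subset_univ _⟩
    | inter s t _ _ hs ht =>
      intro x hx
      obtain ⟨e, he, h1⟩ := hs x hx.1
      obtain ⟨d, hd, h2⟩ := ht x hx.2
      refine ⟨min e d, lt_min he hd, fun y hy => ⟨h1 ⟨hy.1, ?_⟩, h2 ⟨hy.1, ?_⟩⟩⟩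
      · linarith [hy.2, min_le_left e d]
      · linarith [hy.2, min_le_right e d]
    | sUnion S _ ih =>
      rintro x ⟨s, hs, hx⟩
      obtain ⟨e, he, h1⟩ := ih s hs x hx
      exact ⟨e, he, h1.trans (subset_sUnion_of_mem hs)⟩
  · intro h
    choose! e he h1 using h
    have : U = ⋃₀ {s | ∃ x ∈ U, s = Ico x (x + e x)} := by
      ext y; constructor
      · intro hy; exact ⟨_, ⟨y, hy, rfl⟩, le_rfl, by linarith [he y hy]⟩
      · rintro ⟨_, ⟨x, hx, rfl⟩, hy⟩; exact h1 x hx hy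
    rw [this]
    refine TopologicalSpace.GenerateOpen.sUnion _ ?_
    rintro _ ⟨x, hx, rfl⟩
    exact TopologicalSpace.GenerateOpen.basic _ ⟨x, _, by linarith [he x hx], rfl⟩

lemma sorg_regular : @RegularSpace ℝ sorgenfrey := by
  letI := sorgenfrey
  refine RegularSpace.of_exists_mem_nhds_isClosed_subset fun x s hs => ?_
  obtain ⟨U, hUs, hU, hx⟩ := mem_nhds_iff.1 hs
  obtain ⟨e, he, h1⟩ := (sorg_open_iff U).1 hU x hx
  refine ⟨Ico x (x + e), ?_, ?_, h1.trans hUs⟩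
  · refine IsOpen.mem_nhds ((sorg_open_iff _).2 fun y hy => ⟨x + e - y, sub_pos.2 hy.2, fun z hz => ⟨hy.1.trans hz.1, by linarith [hz.2]⟩⟩) ⟨le_rfl, by linarith⟩
  · rw [← isOpen_compl_iff]
    refine (sorg_open_iff _).2 fun y hy => ?_
    by_cases h : y < x
    · exact ⟨x - y, by linarith, fun z hz hz' => by linarith [hz.2, hz'.1]⟩
    · exact ⟨1, one_pos, fun z hz hz' => hy ⟨not_lt.1 h, hz.1.trans_lt hz'.2⟩⟩

lemma sub_nhds (E : Set ℝ) (x : E) (s : Set E) (hs : s ∈ @nhds E (sorgenfreySub E) x) :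
    ∃ ε > 0, ∀ y : E, x.1 ≤ y → y.1 < x + ε → y ∈ s := by
  letI := sorgenfreySub E
  obtain ⟨U, hUs, hU, hx⟩ := mem_nhds_iff.1 hs
  obtain ⟨V, hV, rfl⟩ := hU
  obtain ⟨e, he, h1⟩ := (sorg_open_iff V).1 hV x hx
  exact ⟨e, he, fun y h2 h3 => hUs (h1 ⟨h2, h3⟩)⟩

lemma sq_open (E : Set ℝ) (O : Set (E × E)) (hO : IsOpen[sorgenfreySq E] O) (p : E × E) (hp : p ∈ O) :
    ∃ ε > 0, ∀ q : E × E, p.1.1 ≤ q.1 → q.1.1 < p.1 + ε → p.2.1 ≤ q.2 → q.2.1 < p.2 + ε → q ∈ O := by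
  letI := sorgenfreySub E
  have h : O ∈ 𝓝 p := IsOpen.mem_nhds hO hp
  rw [nhds_prod_eq] at h
  obtain ⟨s, hs, t, ht, hst⟩ := Filter.mem_prod_iff.1 h
  obtain ⟨e, he, h1⟩ := sub_nhds E _ s hs
  obtain ⟨d, hd, h2⟩ := sub_nhds E _ t ht
  refine ⟨min e d, lt_min he hd, fun q a b c f => hst ⟨h1 _ a ?_, h2 _ c ?_⟩⟩
  · linarith [min_le_left e d]
  · linarith [min_le_right e d]

lemma normal_of (E : Set ℝ)
    (hE : ∀ A : Set (ℝ × ℝ), NC A → ∃ Z : Set ℝ, Z.Countable ∧ ∀ p ∈ A, p.1 ∈ E → p.2 ∈ E → p.1 ∈ Z ∨ p.2 ∈ Z) :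
    @NormalSpace (E × E) (sorgenfreySq E) := by
  have hreg : @RegularSpace (E × E) (sorgenfreySq E) := by
    letI := sorgenfreySub E
    haveI : RegularSpace E := @regularSpace_induced ℝ E sorgenfrey sorg_regular Subtype.val
    exact (inferInstance : RegularSpace (E × E))
  letI := sorgenfreySq E
  have hL : LindelofSpace (E × E) := by
    refine ⟨isLindelof_of_countable_subcover fun {κ} U hU hcov => ?_⟩
    have : ∀ p : E × E, ∃ i, p ∈ U i := fun p => mem_iUnion.1 (hcov (mem_univ p))
    choose i hi using this
    choose r hr0 hr using fun p => sq_open E (U (i p)) (hU _) p (hi p)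
    classical
    obtain ⟨K, hKE, hK, hKc⟩ := cover2 E hE
      (fun p => if h : p.1 ∈ E ∧ p.2 ∈ E then r (⟨p.1, h.1⟩, ⟨p.2, h.2⟩) else 1)
      (by intro p hp; split_ifs; exacts [hr0 _, one_pos])
    have := hK.to_subtype
    refine ⟨range fun k : K => i (⟨k.1.1, (hKE k.2).1⟩, ⟨k.1.2, (hKE k.2).2⟩), countable_range _, ?_⟩
    intro q _
    obtain ⟨k, hk, h1, h2, h3, h4⟩ := hKc (q.1.1, q.2.1) ⟨q.1.2, q.2.2⟩
    have hkE : k.1 ∈ E ∧ k.2 ∈ E := hKE hk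
    rw [dif_pos hkE] at h2 h4
    simp only [mem_iUnion]
    exact ⟨_, ⟨⟨k, hk⟩, rfl⟩, hr (⟨k.1, hkE.1⟩, ⟨k.2, hkE.2⟩) q h1 h2 h3 h4⟩
  exact inferInstance

lemma mk_Tk : Cardinal.mk Tk = Cardinal.continuum := by
  simp [Tk, Cardinal.mk_real]

theorem stmt12 (hCH : ContinuumHypothesis) :
    ∃ E : Set ℝ, ¬E.Countable ∧ ¬NEntangled E 2 ∧
      (Set.range ((↑) : ℚ → ℝ) ⊆ E ∧
        ∀ U : Set ℝ, IsOpen U → Set.range ((↑) : ℚ → ℝ) ⊆ U →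
          (E \ U).Countable) ∧
      @NormalSpace (E × E) (sorgenfreySq E) := by
  let ι : Type := (Cardinal.aleph.{0} 1).ord.ToType
  have hι : Cardinal.mk ι = Cardinal.aleph 1 := Cardinal.mk_ord_toType _
  have hc : ∀ a : ι, (Iio a).Countable := by
    intro a
    rw [Cardinal.countable_iff_lt_aleph_one]
    have := Cardinal.mk_Iio_lt a (by rw [hι]; exact (Ordinal.type_toType _).symm)
    rwa [hι] at this
  obtain ⟨e⟩ : Nonempty (ι ≃ Tk) := Cardinal.eq.1 (by rw [hι, mk_Tk]; exact hCH.symm)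
  obtain ⟨x, hx⟩ := exists_seq hc e
  have hne : ∀ a b, a ≠ b → ∀ i j : ℕ, x a + i ≠ x b + j := by
    intro a b hab i j
    rcases lt_or_gt_of_ne hab with h | h
    · exact ((hx b a h a h j i).1).symm
    · exact (hx a b h b h i j).1
  have hinj : Function.Injective x := by
    intro a b hab
    by_contra h
    exact hne a b h 0 0 (by simpa using hab)
  refine ⟨EE x, ?_, ?_, ⟨subset_union_left, ?_⟩, normal_of _ (key hc e e.surjective x hx)⟩
  · intro h
    have h2 : (range x).Countable := h.mono (by rintro _ ⟨a, rfl⟩; exact Or.inr ⟨a, 0, by simp⟩)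
    rw [Cardinal.countable_iff_lt_aleph_one, Cardinal.mk_range_eq x hinj, hι] at h2
    exact lt_irrefl _ h2
  · intro h
    have finj : Function.Injective (fun a : ι => (![x a, x a + 1] : Fin 2 → ℝ)) := by
      intro a b hab
      exact hinj (by simpa using congrFun hab 0)
    obtain ⟨v, ⟨a, rfl⟩, w, ⟨b, rfl⟩, -, h3⟩ := h (range fun a : ι => ![x a, x a + 1]) (by
        rintro _ ⟨a, rfl⟩ i
        fin_cases i
        · exact Or.inr ⟨a, 0, by simp⟩
        · exact Or.inr ⟨a, 1, by simp⟩) (by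
        rintro _ ⟨a, rfl⟩ i j hij
        fin_cases i <;> fin_cases j <;> simp_all) (by
        rintro _ ⟨a, rfl⟩ _ ⟨b, rfl⟩ hab i j
        have hab' : a ≠ b := fun h => hab (by rw [h])
        have := hne a b hab' i j
        fin_cases i <;> fin_cases j <;> simpa using this) (by
        rw [Cardinal.mk_range_eq _ finj, hι]) ![0, 1]
    have h0 := h3 0
    have h1 := h3 1
    simp at h0 h1
    linarith
  · intro U hU hQ
    have : ∀ q : ℚ, ∃ d : ℝ, ∀ y : ℝ, |y - q| < Real.exp d → y ∈ U := by
      intro q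
      obtain ⟨d, hd, h⟩ := Metric.isOpen_iff.1 hU q (hQ ⟨q, rfl⟩)
      refine ⟨Real.log d, fun y hy => h ?_⟩
      rw [Real.exp_log hd] at hy
      exact hy
    choose d hd using this
    obtain ⟨b, hb⟩ := e.surjective (d, fun _ => 0)
    refine (cnt hc x b).mono ?_
    rintro y ⟨hy | ⟨a, n, rfl⟩, hyU⟩
    · exact absurd (hQ hy) hyU
    · refine ⟨a, n, ?_, rfl⟩
      by_contra hab
      have hab := not_le.1 hab
      obtain ⟨q, hq⟩ := (hx a b hab b hab n 0).2.1
      rw [hb] at hq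
      exact hyU (hd q _ hq)
end

section
/- If X ⊆ ℝ is a λ-set, then (X[≤])² is a pseudo-normal topological space. -/
/-- A set of reals `X` is a λ-set if every countable subset of `X` is a
relative `Gδ`-set in `X` with respect to the Euclidean subspace topology. -/
def IsLambdaSet (X : Set ℝ) : Prop :=
  ∀ A : Set ℝ, A ⊆ X → A.Countable → IsGδ (Subtype.val ⁻¹' A : Set X)

/-- A topological space is pseudo-normal if any two disjoint closed sets, one
of which is countable, can be separated by disjoint open sets. -/
def PseudoNormalSpace (Z : Type*) [TopologicalSpace Z] : Prop :=
  ∀ A B : Set Z, IsClosed A → IsClosed B → A.Countable → Disjoint A B →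
    ∃ U V : Set Z, IsOpen U ∧ IsOpen V ∧ A ⊆ U ∧ B ⊆ V ∧ Disjoint U V

open scoped Topology

theorem sorg_open_aux (s : Set ℝ) (hs : IsOpen[sorgenfrey] s) :
    ∀ x ∈ s, ∃ ε > 0, Set.Ico x (x + ε) ⊆ s := by
  induction hs with
  | basic s hs =>
    obtain ⟨a, b, hab, rfl⟩ := hs
    intro x hx
    refine ⟨b - x, by linarith [hx.2], ?_⟩
    intro y hy
    exact ⟨hx.1.trans hy.1, by linarith [hy.2]⟩
  | univ => intro x _; exact ⟨1, one_pos, Set.subset_univ _⟩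
  | inter s t _ _ ih1 ih2 =>
    intro x hx
    obtain ⟨e1, h1, h1'⟩ := ih1 x hx.1
    obtain ⟨e2, h2, h2'⟩ := ih2 x hx.2
    refine ⟨min e1 e2, lt_min h1 h2, ?_⟩
    intro y hy
    have := min_le_left e1 e2
    have := min_le_right e1 e2
    exact ⟨h1' ⟨hy.1, by linarith [hy.2]⟩, h2' ⟨hy.1, by linarith [hy.2]⟩⟩
  | sUnion S _ ih =>
    rintro x ⟨t, ht, hx⟩
    obtain ⟨e, he, h⟩ := ih t ht x hx
    exact ⟨e, he, h.trans (Set.subset_sUnion_of_mem ht)⟩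

def sbox {X : Set ℝ} (p : X × X) (ε : ℝ) : Set (X × X) :=
  {q | (p.1 : ℝ) ≤ q.1 ∧ (q.1 : ℝ) < p.1 + ε ∧ (p.2 : ℝ) ≤ q.2 ∧ (q.2 : ℝ) < p.2 + ε}

theorem sbox_self {X : Set ℝ} (p : X × X) {ε : ℝ} (h : 0 < ε) : p ∈ sbox p ε :=
  ⟨le_rfl, by linarith, le_rfl, by linarith⟩

theorem sbox_open {X : Set ℝ} (p : X × X) (ε : ℝ) (h : 0 < ε) :
    IsOpen[sorgenfreySq X] (sbox p ε) := by
  letI := sorgenfreySub X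
  have key : ∀ x : X, IsOpen[sorgenfreySub X] (Subtype.val ⁻¹' Set.Ico (x : ℝ) (x + ε)) := by
    intro x
    refine ⟨Set.Ico (x : ℝ) (x + ε), ?_, rfl⟩
    exact TopologicalSpace.isOpen_generateFrom_of_mem ⟨x, x + ε, by linarith, rfl⟩
  have := @IsOpen.prod X X (sorgenfreySub X) (sorgenfreySub X) _ _ (key p.1) (key p.2)
  have e : sbox p ε = (Subtype.val ⁻¹' Set.Ico (p.1 : ℝ) (p.1 + ε)) ×ˢ
      (Subtype.val ⁻¹' Set.Ico (p.2 : ℝ) (p.2 + ε)) := by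
    ext q
    simp [sbox, and_assoc]
  rw [e]
  exact this

theorem sq_open_aux {X : Set ℝ} (s : Set (X × X)) (hs : IsOpen[sorgenfreySq X] s) (p : X × X)
    (hp : p ∈ s) : ∃ ε > 0, sbox p ε ⊆ s := by
  obtain ⟨u, v, hu, hv, h1, h2, huv⟩ :=
    (@isOpen_prod_iff X X (sorgenfreySub X) (sorgenfreySub X) s).1 hs p.1 p.2 hp
  obtain ⟨u', hu', rfl⟩ := hu
  obtain ⟨v', hv', rfl⟩ := hv
  obtain ⟨e1, he1, H1⟩ := sorg_open_aux u' hu' _ h1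
  obtain ⟨e2, he2, H2⟩ := sorg_open_aux v' hv' _ h2
  refine ⟨min e1 e2, lt_min he1 he2, ?_⟩
  rintro q ⟨a, b, c, d⟩
  have := min_le_left e1 e2
  have := min_le_right e1 e2
  exact huv ⟨H1 ⟨a, by linarith⟩, H2 ⟨c, by linarith⟩⟩

theorem lam_cover (X : Set ℝ) (hX : IsLambdaSet X) (D : Set X) (hD : D.Countable) :
    ∃ P : ℕ → Set X, (∀ x, ∃ n, x ∈ P n) ∧
      ∀ d ∈ D, ∀ n, ∃ ε > 0, ∀ p ∈ P n, (p : ℝ) < d + ε → (p : ℝ) ≤ d := by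
  have hG := hX (Subtype.val '' D) (by rintro _ ⟨x, _, rfl⟩; exact x.2) (hD.image _)
  rw [Set.preimage_image_eq _ Subtype.val_injective] at hG
  obtain ⟨f, hf, hDf⟩ := hG.eq_iInter_nat
  have := hD.to_subtype
  obtain ⟨g, hg⟩ := exists_surjective_nat (ℕ ⊕ D)
  let Q : ℕ ⊕ D → Set X := Sum.elim (fun n => (f n)ᶜ) (fun d => {d.1})
  have hQ1 : ∀ x, ∃ i, x ∈ Q i := by
    intro x
    by_cases hx : x ∈ D
    · exact ⟨Sum.inr ⟨x, hx⟩, rfl⟩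
    · rw [hDf] at hx
      simp only [Set.mem_iInter, not_forall] at hx
      obtain ⟨n, hn⟩ := hx
      exact ⟨Sum.inl n, hn⟩
  have hQ2 : ∀ d ∈ D, ∀ i, ∃ ε > 0, ∀ p ∈ Q i, (p : ℝ) < d + ε → (p : ℝ) ≤ d := by
    rintro d hd (n | c)
    · have hdn : d ∈ f n := by
        rw [hDf] at hd
        exact Set.mem_iInter.1 hd n
      obtain ⟨ε, he, hb⟩ := Metric.isOpen_iff.1 (hf n) d hdn
      refine ⟨ε, he, fun p hp hlt => ?_⟩
      by_contra hc
      push Not at hc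
      apply hp
      apply hb
      rw [Metric.mem_ball, Subtype.dist_eq, Real.dist_eq, abs_of_pos (by linarith)]
      linarith
    · by_cases h : (c.1 : ℝ) ≤ d
      · refine ⟨1, one_pos, ?_⟩
        rintro p rfl _
        exact h
      · push Not at h
        refine ⟨c.1 - d, by linarith, ?_⟩
        rintro p rfl h'
        linarith
  refine ⟨fun n => Q (g n), fun x => ?_, fun d hd n => hQ2 d hd (g n)⟩
  obtain ⟨i, hi⟩ := hQ1 x
  obtain ⟨n, rfl⟩ := hg i
  exact ⟨n, hi⟩

theorem disj_closure {X : Set ℝ} (u t : Set (X × X))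
    (h : ∀ a ∈ t, ∃ ε > 0, Disjoint (sbox a ε) u) :
    Disjoint (@closure _ (sorgenfreySq X) u) t := by
  letI := sorgenfreySq X
  rw [Set.disjoint_left]
  intro a ha hat
  obtain ⟨ε, he, hd⟩ := h a hat
  obtain ⟨y, hy1, hy2⟩ := mem_closure_iff.1 ha _ (sbox_open a ε he) (sbox_self a he)
  exact Set.disjoint_left.1 hd hy1 hy2

/-- If `X` is a λ-set then `(X[≤])²` is pseudo-normal. -/
theorem stmt13 (X : Set ℝ) (hX : IsLambdaSet X) :
    @PseudoNormalSpace (X × X) (sorgenfreySq X) := by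
  letI := sorgenfreySq X
  intro A B hA hB hAc hAB
  suffices h : SeparatedNhds A B from h
  rw [← hasSeparatingCovers_iff_separatedNhds]
  constructor
  · rcases A.eq_empty_or_nonempty with rfl | hne
    · exact ⟨fun _ => ∅, by simp, by simp⟩
    obtain ⟨f, hf⟩ := hAc.exists_eq_range hne
    have : ∀ n, ∃ ε > 0, sbox (f n) ε ⊆ Bᶜ := fun n =>
      sq_open_aux _ hB.isOpen_compl _ (Set.disjoint_left.1 hAB (hf ▸ Set.mem_range_self n))
    choose e he hs using this
    refine ⟨fun n => sbox (f n) (e n), ?_, fun n => ⟨sbox_open _ _ (he n), ?_⟩⟩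
    · rw [hf]
      rintro _ ⟨n, rfl⟩
      exact Set.mem_iUnion.2 ⟨n, sbox_self _ (he n)⟩
    · apply disj_closure
      intro b hb
      have hnb : b ∉ sbox (f n) (e n) := fun h => hs n h hb
      by_cases h1 : (b.1 : ℝ) < (f n).1
      · refine ⟨_, sub_pos.2 h1, Set.disjoint_left.2 ?_⟩
        rintro y ⟨_, _, _, _⟩ ⟨_, _, _, _⟩
        linarith
      by_cases h2 : (b.2 : ℝ) < (f n).2
      · refine ⟨_, sub_pos.2 h2, Set.disjoint_left.2 ?_⟩
        rintro y ⟨_, _, _, _⟩ ⟨_, _, _, _⟩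
        linarith
      push Not at h1 h2
      refine ⟨1, one_pos, Set.disjoint_left.2 ?_⟩
      rintro y ⟨_, _, _, _⟩ ⟨_, _, _, _⟩
      exact hnb ⟨h1, by linarith, h2, by linarith⟩
  · obtain ⟨P, hP1, hP2⟩ := lam_cover X hX _ (hAc.image Prod.fst)
    obtain ⟨Q, hQ1, hQ2⟩ := lam_cover X hX _ (hAc.image Prod.snd)
    obtain ⟨g, hg⟩ := exists_surjective_nat (ℕ × ℕ × ℕ)
    let V : ℕ × ℕ × ℕ → Set (X × X) := fun i =>
      ⋃ x ∈ {x : X × X | x.1 ∈ P i.1 ∧ x.2 ∈ Q i.2.1 ∧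
        Disjoint (sbox x (1 / ((i.2.2 : ℝ) + 1))) A}, sbox x (1 / ((i.2.2 : ℝ) + 1))
    refine ⟨fun n => V (g n), ?_, fun n => ⟨?_, ?_⟩⟩
    · intro b hb
      obtain ⟨ε, he, hs⟩ := sq_open_aux _ hA.isOpen_compl b (Set.disjoint_right.1 hAB hb)
      obtain ⟨m, hm⟩ := exists_nat_one_div_lt he
      obtain ⟨i, hi⟩ := hP1 b.1
      obtain ⟨j, hj⟩ := hQ1 b.2
      obtain ⟨n, hn⟩ := hg (i, j, m)
      refine Set.mem_iUnion.2 ⟨n, ?_⟩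
      simp only [hn]
      refine Set.mem_biUnion (x := b) ⟨hi, hj, Set.disjoint_left.2 ?_⟩
        (sbox_self b Nat.one_div_pos_of_nat)
      rintro y ⟨h1, h2, h3, h4⟩
      exact hs ⟨h1, h2.trans (by simpa using hm), h3, h4.trans (by simpa using hm)⟩
    · exact isOpen_biUnion fun x _ => sbox_open _ _ Nat.one_div_pos_of_nat
    · apply disj_closure
      intro a ha
      obtain ⟨e1, he1, H1⟩ := hP2 a.1 ⟨a, ha, rfl⟩ (g n).1
      obtain ⟨e2, he2, H2⟩ := hQ2 a.2 ⟨a, ha, rfl⟩ (g n).2.1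
      refine ⟨min e1 e2, lt_min he1 he2, Set.disjoint_left.2 ?_⟩
      rintro y ⟨h1, h2, h3, h4⟩ hy
      obtain ⟨x, ⟨hx1, hx2, hx3⟩, k1, k2, k3, k4⟩ := Set.mem_iUnion₂.1 hy
      have := min_le_left e1 e2
      have := min_le_right e1 e2
      refine Set.disjoint_left.1 hx3 ⟨H1 _ hx1 (by linarith), by linarith,
        H2 _ hx2 (by linarith), by linarith⟩ ha
end

section
/- Let X ⊆ ℝ and let A, B ⊆ X × X be disjoint sets that are closed in (X[≤])². Then the set A \ cl_E(B), where cl_E(B) denotes the closure of B in X × X with respect to the Euclidean subspace topology, has the covering property with respect to B in (X[≤])². -/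
/-- `A` has the covering property with respect to `B`: there is a countable
family of open sets covering `A` whose closures are disjoint from `B`. -/
def CoveringProperty {Z : Type*} [TopologicalSpace Z] (A B : Set Z) : Prop :=
  ∃ U : ℕ → Set Z, (∀ n, IsOpen (U n)) ∧ A ⊆ ⋃ n, U n ∧
    ∀ n, closure (U n) ∩ B = ∅

theorem sorgenfrey_le_std : sorgenfrey ≤ (inferInstance : TopologicalSpace ℝ) := by
  rw [OrderTopology.topology_eq_generate_intervals (α := ℝ)]
  apply le_generateFrom
  have key : ∀ a b : ℝ, a < b → @IsOpen _ sorgenfrey (Set.Ico a b) := fun a b h =>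
    TopologicalSpace.isOpen_generateFrom_of_mem ⟨a, b, h, rfl⟩
  rintro s ⟨a, rfl | rfl⟩
  · have : Set.Ioi a = ⋃ b : Set.Ioi a, Set.Ico (b : ℝ) (b + 1) := by
      ext x
      simp only [Set.mem_Ioi, Set.mem_iUnion, Set.mem_Ico]
      constructor
      · intro h
        exact ⟨⟨x, h⟩, le_refl _, by simp⟩
      · rintro ⟨⟨b, hb⟩, h, -⟩
        exact lt_of_lt_of_le hb h
    rw [this]
    exact @isOpen_iUnion _ _ sorgenfrey _ fun b => key _ _ (by simp)
  · have : Set.Iio a = ⋃ b : Set.Iio a, Set.Ico (b : ℝ) a := by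
      ext x
      simp only [Set.mem_Iio, Set.mem_iUnion, Set.mem_Ico]
      constructor
      · intro h
        exact ⟨⟨x, h⟩, le_refl _, h⟩
      · rintro ⟨⟨b, hb⟩, -, h⟩
        exact h
    rw [this]
    exact @isOpen_iUnion _ _ sorgenfrey _ fun b => key _ _ b.2

theorem sorgenfreySq_le_std (X : Set ℝ) :
    sorgenfreySq X ≤ (inferInstance : TopologicalSpace (X × X)) := by
  have h : sorgenfreySub X ≤ (inferInstance : TopologicalSpace X) :=
    induced_mono sorgenfrey_le_std
  exact inf_le_inf (induced_mono h) (induced_mono h)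

/-- If `A, B ⊆ X × X` are disjoint and closed in `(X[≤])²`, then
`A \ cl_E(B)` (Euclidean subspace closure in `X × X`) has the covering property
with respect to `B` in `(X[≤])²`. -/
theorem stmt18 (X : Set ℝ) (A B : Set (X × X))
    (hA : @IsClosed _ (sorgenfreySq X) A)
    (hB : @IsClosed _ (sorgenfreySq X) B)
    (hAB : Disjoint A B) :
    @CoveringProperty _ (sorgenfreySq X) (A \ closure B) B := by
  have hle := sorgenfreySq_le_std X
  refine ⟨fun n => {z | ((n : ENNReal))⁻¹ < Metric.infEDist z B}, ?_, ?_, ?_⟩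
  · intro n
    exact hle _ (isOpen_lt continuous_const Metric.continuous_infEDist)
  · rintro z ⟨-, hz⟩
    rw [Metric.mem_closure_iff_infEDist_zero] at hz
    obtain ⟨n, hn⟩ := ENNReal.exists_inv_nat_lt hz
    exact Set.mem_iUnion.2 ⟨n, hn⟩
  · intro n
    have hc : @IsClosed _ (sorgenfreySq X) {z | ((n : ENNReal))⁻¹ ≤ Metric.infEDist z B} :=
      IsClosed.mono (isClosed_le continuous_const Metric.continuous_infEDist) hle
    ext z
    simp only [Set.mem_inter_iff, Set.mem_empty_iff_false, iff_false, not_and]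
    intro hz hzB
    have h0 : {z | ((n : ENNReal))⁻¹ < Metric.infEDist z B} ⊆
        {z | ((n : ENNReal))⁻¹ ≤ Metric.infEDist z B} := by
      intro w hw
      rw [Set.mem_setOf_eq] at hw ⊢
      exact hw.le
    have h1 := (letI := sorgenfreySq X; closure_minimal h0 hc) hz
    have h2 : ((n : ENNReal))⁻¹ ≤ Metric.infEDist z B := h1
    rw [Metric.infEDist_zero_of_mem hzB] at h2
    simp at h2
end
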